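/- arXiv:1612.01827 — 3 statements merged into one kernel-verified Lean document; each statement's English description precedes it below -/
import Mathlib

section
/- Let A be a Noetherian ring, B = A[Y]/I a finitely presented A-algebra with Y = (Y_1,…,Y_n), and B₁ = S_B(I/I²) the symmetric algebra of the conormal module I/I² over B. Then H_{B/A}·B₁ ⊆ H_{B₁/A}, and for every γ ∈ H_{B/A} the localization (Ω_{B₁/A})_γ of the module of Kähler differentials of B₁ over A is a free module over the localization (B₁)_γ. -/
open MvPolynomial

universe u v

/-- The ideal `Δ_f` generated by all `r × r` minors of the Jacobian matrix `(∂f_i/∂Y_j)`. -/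
noncomputable def jacobiDelta {A : Type*} [CommRing A] {σ : Type*} {r : ℕ}
    (f : Fin r → MvPolynomial σ A) : Ideal (MvPolynomial σ A) :=
  Ideal.span { m | ∃ c : Fin r → σ, Function.Injective c ∧
    m = Matrix.det (Matrix.of fun i j : Fin r => MvPolynomial.pderiv (c j) (f i)) }

/-- The ideal `Σ_f ((f) : I)·Δ_f` of `A[Y]`, the sum being over all systems
`f = (f₁, …, f_r)` of polynomials from `I` with `r ≤ n`. -/
noncomputable def preHIdeal {A : Type*} [CommRing A] {n : ℕ} {σ : Type*} (e : σ ≃ Fin n)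
    (I : Ideal (MvPolynomial σ A)) : Ideal (MvPolynomial σ A) :=
  ⨆ (r : ℕ) (_ : r ≤ n) (f : Fin r → MvPolynomial σ A) (_ : ∀ i, f i ∈ I),
    (Submodule.colon (Ideal.span (Set.range f)) I) * jacobiDelta f

/-- The ideal `H_{B/A} ⊆ B` for `B = A[Y]/I`: the radical of the image of
`Σ_f ((f) : I)·Δ_f`. -/
noncomputable def HIdeal {A : Type*} [CommRing A] {n : ℕ} {σ : Type*} (e : σ ≃ Fin n)
    (I : Ideal (MvPolynomial σ A)) : Ideal (MvPolynomial σ A ⧸ I) :=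
  (Ideal.map (Ideal.Quotient.mk I) (preHIdeal e I)).radical

variable {A : Type u} [CommRing A] {n N m : ℕ}

/-- The ideal of `A[Y, T]` presenting the symmetric algebra `S_B(I/I²)` of a `B`-module
with presentation matrix `(a_{ij})`: it is generated by (the lift of) `I` together with
the linear forms `Σ_i a_{ij}·T_i`, `j = 1, …, m`. -/
noncomputable def symIdeal (I : Ideal (MvPolynomial (Fin n) A))
    (a : Fin N → Fin m → MvPolynomial (Fin n) A) :
    Ideal (MvPolynomial (Fin n ⊕ Fin N) A) :=
  Ideal.map (MvPolynomial.rename Sum.inl) I ⊔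
    Ideal.span (Set.range fun j : Fin m =>
      ∑ i : Fin N, MvPolynomial.rename Sum.inl (a i j) * MvPolynomial.X (Sum.inr i))

lemma map_le_symIdeal (I : Ideal (MvPolynomial (Fin n) A))
    (a : Fin N → Fin m → MvPolynomial (Fin n) A) :
    Ideal.map (MvPolynomial.rename Sum.inl) I ≤ symIdeal I a := by
  unfold symIdeal; exact le_sup_left

/-- The canonical map `B = A[Y]/I → B₁ = S_B(I/I²) = A[Y,T]/I₁`. -/
noncomputable def symMap (I : Ideal (MvPolynomial (Fin n) A))
    (a : Fin N → Fin m → MvPolynomial (Fin n) A) :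
    (MvPolynomial (Fin n) A ⧸ I) →+* (MvPolynomial (Fin n ⊕ Fin N) A ⧸ symIdeal I a) :=
  Ideal.quotientMap (symIdeal I a) (MvPolynomial.rename Sum.inl).toRingHom
    (Ideal.map_le_iff_le_comap.mp (map_le_symIdeal I a))


/-- The ideal of elements `g` that have a `g`-splitting of the conormal sequence. -/
noncomputable def splitIdeal {A : Type*} [CommRing A] {σ : Type*} [Fintype σ]
    (J : Ideal (MvPolynomial σ A)) : Ideal (MvPolynomial σ A) where
  carrier := {g | ∃ s : σ → MvPolynomial σ A, (∀ v, s v ∈ J) ∧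
    ∀ f ∈ J, g * f - ∑ v, pderiv v f * s v ∈ J ^ 2}
  add_mem' := by
    rintro g h ⟨s, hs, H⟩ ⟨t, ht, H'⟩
    refine ⟨s + t, fun v => J.add_mem (hs v) (ht v), fun f hf => ?_⟩
    convert (J ^ 2).add_mem (H f hf) (H' f hf) using 1
    simp only [Pi.add_apply, mul_add, Finset.sum_add_distrib]
    ring
  zero_mem' := ⟨0, fun v => J.zero_mem, fun f hf => by simp⟩
  smul_mem' := by
    rintro c g ⟨s, hs, H⟩
    refine ⟨fun v => c * s v, fun v => J.mul_mem_left c (hs v), fun f hf => ?_⟩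
    convert (J ^ 2).mul_mem_left c (H f hf) using 1
    simp only [smul_eq_mul, mul_sub, Finset.mul_sum]
    congr 1
    · ring
    · refine Finset.sum_congr rfl fun v _ => by ring

lemma mem_splitIdeal {A : Type*} [CommRing A] {σ : Type*} [Fintype σ]
    {J : Ideal (MvPolynomial σ A)} {g : MvPolynomial σ A} :
    g ∈ splitIdeal J ↔ ∃ s : σ → MvPolynomial σ A, (∀ v, s v ∈ J) ∧
    ∀ f ∈ J, g * f - ∑ v, pderiv v f * s v ∈ J ^ 2 := Iff.rfl

lemma mul_mem_sq {R : Type*} [CommRing R] {J : Ideal R} {x y : R} (hx : x ∈ J) (hy : y ∈ J) :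
    x * y ∈ J ^ 2 := by
  rw [pow_two]; exact Ideal.mul_mem_mul hx hy

lemma pderiv_mem_of_mem_sq {A : Type*} [CommRing A] {σ : Type*}
    {J : Ideal (MvPolynomial σ A)} {f : MvPolynomial σ A} (hf : f ∈ J ^ 2) (v : σ) :
    pderiv v f ∈ J := by
  rw [pow_two] at hf
  refine Submodule.mul_induction_on hf ?_ ?_
  · intro x hx y hy
    rw [Derivation.leibniz]
    exact J.add_mem (J.mul_mem_right _ hx) (J.mul_mem_right _ hy)
  · intro x y hx hy
    rw [map_add]; exact J.add_mem hx hy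

lemma preHIdeal_le_splitIdeal {A : Type*} [CommRing A] {n : ℕ} {σ : Type*} [Fintype σ]
    (e : σ ≃ Fin n) (I : Ideal (MvPolynomial σ A)) : preHIdeal e I ≤ splitIdeal I := by
  classical
  unfold preHIdeal
  refine iSup_le fun r => iSup_le fun _ => iSup_le fun f => iSup_le fun hf => ?_
  rw [Ideal.mul_le]
  intro h hh d hd
  unfold jacobiDelta at hd
  refine Submodule.span_induction (p := fun d _ => h * d ∈ splitIdeal I) ?_ ?_ ?_ ?_ hd
  · rintro _ ⟨c, hc, rfl⟩
    set D : Matrix (Fin r) (Fin r) (MvPolynomial σ A) :=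
      Matrix.of fun i j : Fin r => MvPolynomial.pderiv (c j) (f i) with hD
    rw [mem_splitIdeal]
    refine ⟨fun v => ∑ j, if c j = v then h * ∑ i, D.adjugate j i * f i else 0,
      fun v => ?_, fun g hg => ?_⟩
    · refine Ideal.sum_mem _ fun j _ => ?_
      split_ifs
      · exact I.mul_mem_left _ (I.sum_mem fun i _ => I.mul_mem_left _ (hf i))
      · exact I.zero_mem
    · have h1 : ∑ v, pderiv v g * (∑ j, if c j = v then h * ∑ i, D.adjugate j i * f i else 0)
          = ∑ j, pderiv (c j) g * (h * ∑ i, D.adjugate j i * f i) := by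
        simp only [Finset.mul_sum]
        rw [Finset.sum_comm]
        refine Finset.sum_congr rfl fun j _ => ?_
        rw [Finset.sum_eq_single (c j)]
        · simp [Finset.mul_sum]
        · intro b _ hb
          rw [if_neg (Ne.symm hb), mul_zero]
        · simp
      rw [h1]
      have hg' : h * g ∈ Ideal.span (Set.range f) := by
        have := Submodule.mem_colon.mp hh g hg
        simpa using this
      obtain ⟨u, hu⟩ := (Ideal.mem_span_range_iff_exists_fun).mp hg'
      have h2 : ∀ j, h * pderiv (c j) g - ∑ k, u k * D k j ∈ I := by
        intro j
        have h3 := congrArg (pderiv (c j)) hu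
        simp only [map_sum, Derivation.leibniz, smul_eq_mul] at h3
        rw [Finset.sum_add_distrib] at h3
        have : h * pderiv (c j) g - ∑ k, u k * D k j =
            ∑ k, f k * pderiv (c j) (u k) - g * pderiv (c j) h := by
          simp only [hD, Matrix.of_apply]
          linear_combination - h3
        rw [this]
        exact I.sub_mem (I.sum_mem fun k _ => I.mul_mem_right _ (hf k)) (I.mul_mem_right _ hg)
      have h4 : ∀ i, D.det * u i = ∑ j, (∑ k, u k * D k j) * D.adjugate j i := by
        intro i
        have : Matrix.vecMul (Matrix.vecMul u D) D.adjugate = D.det • u := by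
          rw [Matrix.vecMul_vecMul, Matrix.mul_adjugate, Matrix.vecMul_smul, Matrix.vecMul_one]
        have := congrFun this i
        simp only [Matrix.vecMul, dotProduct, Pi.smul_apply, smul_eq_mul] at this
        exact this.symm
      have h5 : h * D.det * g - ∑ j, pderiv (c j) g * (h * ∑ i, D.adjugate j i * f i)
          = - ∑ j, ∑ i, (h * pderiv (c j) g - ∑ k, u k * D k j) * (D.adjugate j i * f i) := by
        have h6 : h * D.det * g = ∑ j, ∑ i, (∑ k, u k * D k j) * (D.adjugate j i * f i) := by
          rw [Finset.sum_comm]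
          calc h * D.det * g = D.det * (h * g) := by ring
            _ = ∑ i, (D.det * u i) * f i := by
              rw [← hu, Finset.mul_sum]
              exact Finset.sum_congr rfl fun i _ => by ring
            _ = _ := by
              refine Finset.sum_congr rfl fun i _ => ?_
              rw [h4, Finset.sum_mul]
              exact Finset.sum_congr rfl fun j _ => by ring
        have h7 : ∑ j, pderiv (c j) g * (h * ∑ i, D.adjugate j i * f i) =
            ∑ j, ∑ i, (h * pderiv (c j) g) * (D.adjugate j i * f i) := by
          refine Finset.sum_congr rfl fun j _ => ?_
          rw [Finset.mul_sum, Finset.mul_sum]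
          exact Finset.sum_congr rfl fun i _ => by ring
        rw [h6, h7]
        simp only [sub_mul, Finset.sum_sub_distrib]
        ring
      rw [h5]
      refine (I ^ 2).neg_mem ((I ^ 2).sum_mem fun j _ => (I ^ 2).sum_mem fun i _ => ?_)
      exact mul_mem_sq (h2 j) (I.mul_mem_left _ (hf i))
  · simp
  · intro x y _ _ hx hy
    rw [mul_add]; exact Ideal.add_mem _ hx hy
  · intro c x _ hx
    rw [smul_eq_mul, mul_left_comm]; exact Ideal.mul_mem_left _ _ hx

lemma exists_minor_ne_zero {k : Type*} [Field k] {σ : Type*} [Finite σ] {r : ℕ}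
    (w : Fin r → σ → k) (hw : LinearIndependent k w) :
    ∃ c : Fin r → σ, Function.Injective c ∧
      Matrix.det (Matrix.of fun i j : Fin r => w i (c j)) ≠ 0 := by
  classical
  cases nonempty_fintype σ
  let W : Matrix (Fin r) σ k := Matrix.of w
  have hrank : W.rank = r := by
    have : LinearIndependent k W.row := hw
    simpa using this.rank_matrix
  obtain ⟨κ, a, ha, hspan, hli⟩ := exists_linearIndependent' k W.col
  have hfr : Module.finrank k (Submodule.span k (Set.range (W.col ∘ a))) = r := by
    rw [hspan, ← Matrix.rank_eq_finrank_span_cols, hrank]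
  have : Finite κ := Finite.of_injective a ha
  cases nonempty_fintype κ
  have hcard : Fintype.card κ = r := by
    rw [← hfr, finrank_span_eq_card hli]
  let e : Fin r ≃ κ := (Fintype.equivFinOfCardEq hcard).symm
  refine ⟨a ∘ e, ha.comp e.injective, ?_⟩
  have hli2 : LinearIndependent k (Matrix.of fun i j : Fin r => w i ((a ∘ e) j)).col := by
    exact hli.comp e e.injective
  have := Matrix.linearIndependent_cols_iff_isUnit.mp hli2
  rw [Matrix.isUnit_iff_isUnit_det] at this
  exact this.ne_zero

lemma exists_notMem_mul_le {P : Type*} [CommRing P] {J K q : Ideal P} [hq : q.IsPrime]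
    (hJ : J.FG) (hloc : ∀ g ∈ J, ∃ b, b ∉ q ∧ b * g ∈ K ⊔ q * J) :
    ∃ h, h ∉ q ∧ ∀ g ∈ J, h * g ∈ K := by
  classical
  obtain ⟨S, hS⟩ := hJ
  have hβ : ∃ β, β ∉ q ∧ ∀ g ∈ J, β * g ∈ K ⊔ q * J := by
    have hmem : ∀ g : S, (g : P) ∈ J := fun g => hS ▸ Submodule.subset_span g.2
    choose b hb hb' using fun g : S => hloc g (hmem g)
    refine ⟨∏ g, b g, ?_, ?_⟩
    · rw [hq.prod_mem_iff]
      rintro ⟨i, _, hi⟩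
      exact hb i hi
    · intro g hg
      rw [← hS] at hg
      refine Submodule.span_induction (p := fun g _ => (∏ g, b g) * g ∈ K ⊔ q * J)
        ?_ ?_ ?_ ?_ hg
      · intro x hx
        rw [← Finset.mul_prod_erase Finset.univ b (Finset.mem_univ ⟨x, hx⟩), mul_comm (b _),
          mul_assoc]
        exact Ideal.mul_mem_left _ _ (hb' ⟨x, hx⟩)
      · simp
      · intro x y _ _ hx hy
        rw [mul_add]; exact Ideal.add_mem _ hx hy
      · intro c x _ hx
        rw [smul_eq_mul, mul_left_comm]; exact Ideal.mul_mem_left _ _ hx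
  obtain ⟨β, hβq, hβ⟩ := hβ
  have hfin : Module.Finite P J := Module.Finite.iff_fg.mpr ⟨S, hS⟩
  let K' : Submodule P J := Submodule.comap J.subtype K
  let φ : Module.End P (J ⧸ K') := algebraMap P (Module.End P (J ⧸ K')) β
  have hφ : ∀ x, φ x = β • x := fun x => rfl
  have hrange : LinearMap.range φ ≤ q • (⊤ : Submodule P (J ⧸ K')) := by
    rintro _ ⟨x, rfl⟩
    obtain ⟨⟨g, hg⟩, rfl⟩ := Submodule.mkQ_surjective K' x
    obtain ⟨y, hy, z, hz, hyz⟩ := Submodule.mem_sup.mp (hβ g hg)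
    have hzJ : z ∈ J := (Ideal.mul_le_right : q * J ≤ J) hz
    have hyJ : y ∈ J := by
      have : y = β * g - z := by rw [← hyz]; ring
      rw [this]; exact J.sub_mem (J.mul_mem_left _ hg) hzJ
    have h1 : φ (K'.mkQ ⟨g, hg⟩) = K'.mkQ ⟨z, hzJ⟩ := by
      rw [hφ, ← map_smul, ← sub_eq_zero, ← map_sub, Submodule.mkQ_apply,
        Submodule.Quotient.mk_eq_zero]
      change β * g - z ∈ K
      rw [← hyz]; simpa using hy
    rw [h1]
    have h2 : ∀ z (hz : z ∈ q * J), ∃ hzJ : z ∈ J, K'.mkQ ⟨z, hzJ⟩ ∈ q • (⊤ : Submodule P (J ⧸ K')) := by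
      intro z hz
      refine Submodule.mul_induction_on hz ?_ ?_
      · intro c hc x hx
        refine ⟨J.mul_mem_left _ hx, ?_⟩
        have : K'.mkQ ⟨c * x, J.mul_mem_left _ hx⟩ = c • K'.mkQ ⟨x, hx⟩ := rfl
        rw [this]
        exact Submodule.smul_mem_smul hc trivial
      · rintro x y ⟨hx, hx'⟩ ⟨hy, hy'⟩
        refine ⟨J.add_mem hx hy, ?_⟩
        have : K'.mkQ ⟨x + y, J.add_mem hx hy⟩ = K'.mkQ ⟨x, hx⟩ + K'.mkQ ⟨y, hy⟩ := rfl
        rw [this]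
        exact Submodule.add_mem _ hx' hy'
    exact (h2 z hz).2
  obtain ⟨p, hp, -, hcoef, haev⟩ :=
    LinearMap.exists_monic_and_natDegree_eq_and_coeff_mem_pow_and_aeval_eq_zero P φ q hrange
  refine ⟨p.eval β, ?_, ?_⟩
  · intro hmem
    apply hβq
    rw [Polynomial.eval_eq_sum_range, Finset.sum_range_succ] at hmem
    have h3 : ∑ x ∈ Finset.range p.natDegree, p.coeff x * β ^ x ∈ q := by
      refine q.sum_mem fun x hx => q.mul_mem_right _ ?_
      have hx' := Finset.mem_range.mp hx
      exact Ideal.pow_le_self (by omega) (hcoef x)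
    have h4 := (Ideal.add_mem_iff_right q h3).mp hmem
    rw [Polynomial.Monic.coeff_natDegree hp, one_mul] at h4
    exact hq.mem_of_pow_mem _ h4
  · intro g hg
    rw [Polynomial.aeval_algebraMap_apply] at haev
    have h5 := LinearMap.congr_fun haev (K'.mkQ ⟨g, hg⟩)
    change (Polynomial.aeval β p) • K'.mkQ ⟨g, hg⟩ = 0 at h5
    rw [← map_smul, Submodule.mkQ_apply, Submodule.Quotient.mk_eq_zero] at h5
    have h6 : Polynomial.aeval β p * g ∈ K := h5
    rwa [Polynomial.coe_aeval_eq_eval] at h6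

lemma splitIdeal_map_le_HIdeal {A : Type*} [CommRing A] [IsNoetherianRing A] {n : ℕ}
    {σ : Type*} [Fintype σ]
    (e : σ ≃ Fin n) (J : Ideal (MvPolynomial σ A)) {γ : MvPolynomial σ A}
    (hγ : γ ∈ splitIdeal J) : Ideal.Quotient.mk J γ ∈ HIdeal e J := by
  classical
  unfold HIdeal
  rw [Ideal.radical_eq_sInf, Ideal.mem_sInf]
  rintro Q ⟨hQ, hQp⟩
  by_contra hγQ
  let q : Ideal (MvPolynomial σ A) := Q.comap (Ideal.Quotient.mk J)
  have hq : q.IsPrime := Ideal.comap_isPrime _ _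
  have hγq : γ ∉ q := hγQ
  have hJq : J ≤ q := fun x hx => by
    change Ideal.Quotient.mk J x ∈ Q
    rw [Ideal.Quotient.eq_zero_iff_mem.mpr hx]; exact Q.zero_mem
  have hpre : preHIdeal e J ≤ q := Ideal.map_le_iff_le_comap.mp hQ
  obtain ⟨s, hs, H⟩ := mem_splitIdeal.mp hγ
  let k := FractionRing (MvPolynomial σ A ⧸ q)
  let φ : MvPolynomial σ A →+* k := (algebraMap _ k).comp (Ideal.Quotient.mk q)
  have hφ : ∀ x, φ x = 0 ↔ x ∈ q := fun x => by
    rw [RingHom.comp_apply, map_eq_zero_iff _ (IsFractionRing.injective _ k),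
      Ideal.Quotient.eq_zero_iff_mem]
  let v : J → σ → k := fun f j => φ (pderiv j (f : MvPolynomial σ A))
  obtain ⟨κ, a, ha, hspan, hli⟩ := exists_linearIndependent' k v
  have hκ : Finite κ := hli.finite
  cases nonempty_fintype κ
  let r := Fintype.card κ
  let ek : Fin r ≃ κ := (Fintype.equivFin κ).symm
  let f : Fin r → MvPolynomial σ A := fun i => (a (ek i) : MvPolynomial σ A)
  have hf : ∀ i, f i ∈ J := fun i => (a (ek i)).2
  have hli' : LinearIndependent k (fun i => v (a (ek i))) := hli.comp ek ek.injective
  have hspan' : Submodule.span k (Set.range fun i => v (a (ek i))) =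
      Submodule.span k (Set.range v) := by
    rw [← hspan]
    congr 1
    exact ek.surjective.range_comp (v ∘ a)
  have hr : r ≤ n := by
    have := hli'.fintype_card_le_finrank
    simpa [Fintype.card_congr e] using this
  obtain ⟨c, hc, hdet⟩ := exists_minor_ne_zero _ hli'
  have hloc : ∀ g ∈ J, ∃ b, b ∉ q ∧ b * g ∈ Ideal.span (Set.range f) ⊔ q * J := by
    intro g hg
    have h1 : v ⟨g, hg⟩ ∈ Submodule.span k (Set.range fun i => v (a (ek i))) := by
      rw [hspan']; exact Submodule.subset_span ⟨_, rfl⟩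
    obtain ⟨x, hx⟩ := (Submodule.mem_span_range_iff_exists_fun k).mp h1
    obtain ⟨b, hb⟩ := IsLocalization.exist_integer_multiples_of_finite
      (nonZeroDivisors (MvPolynomial σ A ⧸ q)) x
    obtain ⟨b', hb'⟩ := Ideal.Quotient.mk_surjective (b : MvPolynomial σ A ⧸ q)
    have hbq : b' ∉ q := by
      rw [← Ideal.Quotient.eq_zero_iff_mem, hb']
      exact nonZeroDivisors.coe_ne_zero b
    have hy : ∀ i, ∃ y, φ y = φ b' * x i := by
      intro i
      obtain ⟨y, hy⟩ := hb i
      obtain ⟨y', rfl⟩ := Ideal.Quotient.mk_surjective y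
      refine ⟨y', ?_⟩
      simp only [φ, RingHom.comp_apply]
      rw [hy, hb', Algebra.smul_def]
    choose y hy using hy
    let g' := b' * g - ∑ i, y i * f i
    have hg' : g' ∈ J := J.sub_mem (J.mul_mem_left _ hg) (J.sum_mem fun i _ =>
      J.mul_mem_left _ (hf i))
    have hd : ∀ j, pderiv j g' ∈ q := by
      intro j
      rw [← hφ]
      have h0 : ∀ z ∈ J, φ z = 0 := fun z hz => (hφ z).mpr (hJq hz)
      have hxj := congrFun hx j
      simp only [Finset.sum_apply, Pi.smul_apply, smul_eq_mul, v] at hxj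
      simp only [g', map_sub, map_sum, Derivation.leibniz, smul_eq_mul, map_add, map_mul,
        h0 g hg, h0 _ (hf _), hy, zero_mul, add_zero]
      rw [← hxj, Finset.mul_sum, sub_eq_zero]
      exact Finset.sum_congr rfl fun i _ => by ring
    refine ⟨γ * b', fun hmem => (hq.mem_or_mem hmem).elim hγq hbq, ?_⟩
    have h2 : γ * g' ∈ q * J := by
      have h3 := H g' hg'
      have h4 : J ^ 2 ≤ q * J := by rw [pow_two]; exact Ideal.mul_mono_left hJq
      have h5 : ∑ v, pderiv v g' * s v ∈ q * J :=
        Ideal.sum_mem _ fun j _ => Ideal.mul_mem_mul (hd j) (hs j)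
      simpa using Ideal.add_mem _ (h4 h3) h5
    have h6 : γ * b' * g = γ * ∑ i, y i * f i + γ * g' := by simp only [g']; ring
    rw [h6]
    refine Submodule.add_mem_sup (Ideal.mul_mem_left _ _ (Ideal.sum_mem _ fun i _ =>
      Ideal.mul_mem_left _ _ (Ideal.subset_span ⟨i, rfl⟩))) h2
  obtain ⟨h, hhq, hh⟩ := exists_notMem_mul_le (IsNoetherian.noetherian J) hloc
  have hmem : h * Matrix.det (Matrix.of fun i j : Fin r => pderiv (c j) (f i)) ∈
      preHIdeal e J := by
    unfold preHIdeal
    refine Submodule.mem_iSup_of_mem r (Submodule.mem_iSup_of_mem hr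
      (Submodule.mem_iSup_of_mem f (Submodule.mem_iSup_of_mem hf ?_)))
    refine Ideal.mul_mem_mul ?_ (Ideal.subset_span ⟨c, hc, rfl⟩)
    rw [Submodule.mem_colon]
    intro g hg
    exact hh g hg
  rcases hq.mem_or_mem (hpre hmem) with h1 | h1
  · exact hhq h1
  · rw [← hφ, RingHom.map_det] at h1
    exact hdet h1

lemma exists_splitting_data {A : Type*} [CommRing A] {n N m : ℕ}
    (I : Ideal (MvPolynomial (Fin n) A))
    (a : Fin N → Fin m → MvPolynomial (Fin n) A)
    (π : (Fin N → (MvPolynomial (Fin n) A ⧸ I)) →ₗ[MvPolynomial (Fin n) A ⧸ I] I.Cotangent)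
    (hsurj : Function.Surjective π)
    (hker : LinearMap.ker π = Submodule.span (MvPolynomial (Fin n) A ⧸ I)
      (Set.range fun j : Fin m => fun i : Fin N => Ideal.Quotient.mk I (a i j)))
    {g : MvPolynomial (Fin n) A} (hg : g ∈ splitIdeal I) :
    ∃ (f : Fin N → MvPolynomial (Fin n) A) (σ : Fin N → Fin n → MvPolynomial (Fin n) A)
      (b : Fin m → Fin N → MvPolynomial (Fin n) A),
      (∀ i, f i ∈ I) ∧
      (∀ h ∈ I, g * h - ∑ j, pderiv j h * ∑ i, σ i j * f i ∈ I ^ 2) ∧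
      (∀ l, ∑ i, a i l * f i ∈ I ^ 2) ∧
      (∀ i' i, (if i' = i then g else 0) - ∑ j, σ i' j * pderiv j (f i)
        - ∑ l, a i' l * b l i ∈ I) := by
  classical
  choose f hf using fun i : Fin N => I.toCotangent_surjective (π (Pi.single i 1))
  have hfI : ∀ i, (f i : MvPolynomial (Fin n) A) ∈ I := fun i => (f i).2
  have key : ∀ w : Fin N → MvPolynomial (Fin n) A,
      π (fun i => Ideal.Quotient.mk I (w i)) = I.toCotangent (∑ i, w i • f i) := by
    intro w
    have h1 : (fun i => Ideal.Quotient.mk I (w i)) =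
        ∑ i, w i • (Pi.single i 1 : Fin N → (MvPolynomial (Fin n) A ⧸ I)) := by
      ext i
      simp only [Finset.sum_apply, Pi.smul_apply, Pi.single_apply, smul_ite, smul_zero,
        Finset.sum_ite_eq, Finset.mem_univ, if_true]
      exact (congrArg (Ideal.Quotient.mk I) (mul_one (w i))).symm
    have h2 : ∀ (c : MvPolynomial (Fin n) A) x, π (c • x) = c • π x := by
      intro c x
      rw [← algebraMap_smul (MvPolynomial (Fin n) A ⧸ I) c x, map_smul, algebraMap_smul]
    rw [h1, map_sum, map_sum]
    refine Finset.sum_congr rfl fun i _ => ?_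
    rw [h2, map_smul, hf]
  obtain ⟨s, hs, H⟩ := mem_splitIdeal.mp hg
  have hσ : ∀ j, ∃ w : Fin N → MvPolynomial (Fin n) A, s j - ∑ i, w i * f i ∈ I ^ 2 := by
    intro j
    obtain ⟨w, hw⟩ := hsurj (I.toCotangent ⟨s j, hs j⟩)
    choose w' hw' using fun i => Ideal.Quotient.mk_surjective (w i)
    refine ⟨w', ?_⟩
    have h3 : w = fun i => Ideal.Quotient.mk I (w' i) := by ext i; rw [hw']
    rw [h3, key] at hw
    have h4 := (Ideal.toCotangent_eq I).mp hw.symm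
    simpa using h4
  choose σ hσ using hσ
  have D1 : ∀ h ∈ I, g * h - ∑ j, pderiv j h * ∑ i, σ j i * (f i : MvPolynomial (Fin n) A)
      ∈ I ^ 2 := by
    intro h hh
    have h1 : g * h - ∑ j, pderiv j h * ∑ i, σ j i * (f i : MvPolynomial (Fin n) A) =
        (g * h - ∑ j, pderiv j h * s j) +
        ∑ j, pderiv j h * (s j - ∑ i, σ j i * (f i : MvPolynomial (Fin n) A)) := by
      simp only [mul_sub, Finset.sum_sub_distrib]; ring
    rw [h1]
    exact Ideal.add_mem _ (H h hh) (Ideal.sum_mem _ fun j _ => Ideal.mul_mem_left _ _ (hσ j))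
  have D4 : ∀ i, ∃ b : Fin m → MvPolynomial (Fin n) A, ∀ i',
      (if i' = i then g else 0) - ∑ j, σ j i' * pderiv j (f i : MvPolynomial (Fin n) A)
        - ∑ l, a i' l * b l ∈ I := by
    intro i
    let w : Fin N → MvPolynomial (Fin n) A := fun i' =>
      (if i' = i then g else 0) - ∑ j, σ j i' * pderiv j (f i : MvPolynomial (Fin n) A)
    have h1 : (fun i' => Ideal.Quotient.mk I (w i')) ∈ LinearMap.ker π := by
      rw [LinearMap.mem_ker, key, Ideal.toCotangent_eq_zero]
      convert D1 (f i) (hfI i) using 1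
      simp only [AddSubmonoidClass.coe_finsetSum, Submodule.coe_smul, smul_eq_mul, w, sub_mul,
        Finset.sum_sub_distrib]
      congr 1
      · simp
      · simp only [Finset.sum_mul, Finset.mul_sum]
        rw [Finset.sum_comm]
        exact Finset.sum_congr rfl fun j _ => Finset.sum_congr rfl fun i' _ => by ring
    rw [hker] at h1
    obtain ⟨c, hc⟩ := (Submodule.mem_span_range_iff_exists_fun _).mp h1
    choose b hb using fun l => Ideal.Quotient.mk_surjective (c l)
    refine ⟨b, fun i' => ?_⟩
    have h2 := congrFun hc i'
    simp only [Finset.sum_apply, Pi.smul_apply, smul_eq_mul] at h2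
    rw [← Ideal.Quotient.eq_zero_iff_mem, map_sub, sub_eq_zero]
    change Ideal.Quotient.mk I (w i') = _
    rw [← h2, map_sum]
    exact Finset.sum_congr rfl fun l _ => by rw [map_mul, hb, mul_comm]
  choose b hb using D4
  refine ⟨fun i => f i, fun i j => σ j i, fun l i => b i l, hfI, D1, ?_, fun i' i => hb i i'⟩
  intro l
  have h1 : (fun i => Ideal.Quotient.mk I (a i l)) ∈ LinearMap.ker π := by
    rw [hker]; exact Submodule.subset_span ⟨l, rfl⟩
  rw [LinearMap.mem_ker, key, Ideal.toCotangent_eq_zero] at h1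
  simpa using h1

lemma pderiv_inr_rename_inl {A : Type*} [CommRing A] {α β : Type*} (i : β)
    (p : MvPolynomial α A) :
    pderiv (Sum.inr i : α ⊕ β) (rename Sum.inl p) = 0 := by
  classical
  induction p using MvPolynomial.induction_on with
  | C a => simp
  | add p q hp hq => simp [hp, hq]
  | mul_X p j hp => simp [hp, pderiv_X]

/-- The operator `F ↦ g F - ∑ ∂_v F s_v`. -/
noncomputable def splitOp {A : Type*} [CommRing A] {σ : Type*} [Fintype σ]
    (g : MvPolynomial σ A) (s : σ → MvPolynomial σ A) (F : MvPolynomial σ A) :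
    MvPolynomial σ A := g * F - ∑ v, pderiv v F * s v

section splitOp
variable {A : Type*} [CommRing A] {σ : Type*} [Fintype σ]
    (g : MvPolynomial σ A) (s : σ → MvPolynomial σ A)

lemma splitOp_add (F G : MvPolynomial σ A) :
    splitOp g s (F + G) = splitOp g s F + splitOp g s G := by
  simp only [splitOp, map_add, add_mul, Finset.sum_add_distrib]; ring

lemma splitOp_zero : splitOp g s 0 = 0 := by simp [splitOp]

lemma splitOp_mul (c F : MvPolynomial σ A) :
    splitOp g s (c * F) = c * splitOp g s F - F * ∑ v, pderiv v c * s v := by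
  simp only [splitOp, Derivation.leibniz, smul_eq_mul, add_mul, Finset.sum_add_distrib, mul_sub,
    Finset.mul_sum, sub_sub]
  congr 1
  · ring
  · congr 1
    · exact Finset.sum_congr rfl fun v _ => by ring
    · exact Finset.sum_congr rfl fun v _ => by ring

variable {g s} {J : Ideal (MvPolynomial σ A)}

lemma splitOp_mem (hs : ∀ v, s v ∈ J) {F : MvPolynomial σ A} (hF : F ∈ J) : splitOp g s F ∈ J :=
  J.sub_mem (J.mul_mem_left _ hF) (J.sum_mem fun v _ => J.mul_mem_left _ (hs v))

lemma splitOp_mul_sub_mem (hs : ∀ v, s v ∈ J) (c : MvPolynomial σ A) {F : MvPolynomial σ A} (hF : F ∈ J) :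
    splitOp g s (c * F) - c * splitOp g s F ∈ J ^ 2 := by
  rw [splitOp_mul, sub_sub_cancel_left]
  exact (J ^ 2).neg_mem (mul_mem_sq hF (J.sum_mem fun v _ => J.mul_mem_left _ (hs v)))

lemma splitOp_mem_sq (hs : ∀ v, s v ∈ J) {F : MvPolynomial σ A} (hF : F ∈ J ^ 2) : splitOp g s F ∈ J ^ 2 := by
  rw [pow_two] at hF
  refine Submodule.mul_induction_on hF ?_ ?_
  · intro x hx y hy
    have h1 := splitOp_mul_sub_mem (g := g) hs x hy
    have h2 : x * splitOp g s y ∈ J ^ 2 := mul_mem_sq hx (splitOp_mem hs hy)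
    simpa using (J ^ 2).add_mem h1 h2
  · intro x y hx hy
    rw [splitOp_add]; exact (J ^ 2).add_mem hx hy

lemma splitOp_span_mem (hs : ∀ v, s v ∈ J) {L : Ideal (MvPolynomial σ A)} {S : Set (MvPolynomial σ A)}
    (hK : Ideal.span S ≤ J) (hJL : J ^ 2 ≤ L) (h : ∀ F ∈ S, splitOp g s F ∈ L)
    {F : MvPolynomial σ A} (hF : F ∈ Ideal.span S) :
    splitOp g s F ∈ L := by
  refine Submodule.span_induction (p := fun F _ => splitOp g s F ∈ L) h ?_ ?_ ?_ hF
  · rw [splitOp_zero]; exact L.zero_mem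
  · intro x y _ _ hx hy
    rw [splitOp_add]; exact L.add_mem hx hy
  · intro c x hxS hx
    have h1 := hJL (splitOp_mul_sub_mem (g := g) hs c (hK hxS))
    simpa using L.add_mem h1 (L.mul_mem_left c hx)

end splitOp

lemma splitting_key {A : Type*} [CommRing A] {n N m : ℕ}
    (I : Ideal (MvPolynomial (Fin n) A))
    (a : Fin N → Fin m → MvPolynomial (Fin n) A)
    {g : MvPolynomial (Fin n) A}
    (f : Fin N → MvPolynomial (Fin n) A) (σ : Fin N → Fin n → MvPolynomial (Fin n) A)
    (b : Fin m → Fin N → MvPolynomial (Fin n) A)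
    (hf : ∀ i, f i ∈ I)
    (D3 : ∀ l, ∑ i, a i l * f i ∈ I ^ 2)
    (D4 : ∀ i' i, (if i' = i then g else 0) - ∑ j, σ i' j * pderiv j (f i)
        - ∑ l, a i' l * b l i ∈ I) :
    ∀ l i', g * a i' l - ∑ i, a i l * ∑ l', b l' i * a i' l' ∈ I := by
  classical
  intro l i'
  have h1 : ∀ j, ∑ i, a i l * pderiv j (f i) ∈ I := by
    intro j
    have h2 := pderiv_mem_of_mem_sq (D3 l) j
    simp only [map_sum, Derivation.leibniz, smul_eq_mul, Finset.sum_add_distrib] at h2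
    exact (Ideal.add_mem_iff_left I (I.sum_mem fun i _ => I.mul_mem_right _ (hf i))).mp h2
  have h3 : ∑ i, a i l * ((if i' = i then g else 0) - ∑ j, σ i' j * pderiv j (f i)
      - ∑ l, a i' l * b l i) ∈ I := I.sum_mem fun i _ => I.mul_mem_left _ (D4 i' i)
  have h4 : g * a i' l - ∑ i, a i l * ∑ l', b l' i * a i' l' =
      ∑ i, a i l * ((if i' = i then g else 0) - ∑ j, σ i' j * pderiv j (f i)
      - ∑ l, a i' l * b l i) + ∑ j, σ i' j * ∑ i, a i l * pderiv j (f i) := by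
    simp only [mul_sub, Finset.sum_sub_distrib, mul_ite, mul_zero, Finset.sum_ite_eq,
      Finset.mem_univ, if_true]
    have h5 : ∑ i, a i l * ∑ j, σ i' j * pderiv j (f i) =
        ∑ j, σ i' j * ∑ i, a i l * pderiv j (f i) := by
      simp only [Finset.mul_sum]
      rw [Finset.sum_comm]
      exact Finset.sum_congr rfl fun j _ => Finset.sum_congr rfl fun i _ => by ring
    have h6 : ∑ i, a i l * ∑ l', a i' l' * b l' i = ∑ i, a i l * ∑ l', b l' i * a i' l' :=
      Finset.sum_congr rfl fun i _ => by
        congr 1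
        exact Finset.sum_congr rfl fun l' _ => by ring
    rw [h5, h6]; ring
  rw [h4]
  exact I.add_mem h3 (I.sum_mem fun j _ => I.mul_mem_left _ (h1 j))

lemma rename_sq_mem_splitIdeal {A : Type*} [CommRing A] {n N m : ℕ}
    (I : Ideal (MvPolynomial (Fin n) A))
    (a : Fin N → Fin m → MvPolynomial (Fin n) A)
    {g : MvPolynomial (Fin n) A}
    (f : Fin N → MvPolynomial (Fin n) A) (σ : Fin N → Fin n → MvPolynomial (Fin n) A)
    (b : Fin m → Fin N → MvPolynomial (Fin n) A)
    (hf : ∀ i, f i ∈ I)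
    (D1 : ∀ h ∈ I, g * h - ∑ j, pderiv j h * ∑ i, σ i j * f i ∈ I ^ 2)
    (D3 : ∀ l, ∑ i, a i l * f i ∈ I ^ 2)
    (D4 : ∀ i' i, (if i' = i then g else 0) - ∑ j, σ i' j * pderiv j (f i)
        - ∑ l, a i' l * b l i ∈ I) :
    (rename Sum.inl g) ^ 2 ∈ splitIdeal (symIdeal I a) := by
  classical
  set J := symIdeal I a with hJ
  let ι : MvPolynomial (Fin n) A →ₐ[A] MvPolynomial (Fin n ⊕ Fin N) A := rename Sum.inl
  let L : Fin m → MvPolynomial (Fin n ⊕ Fin N) A := fun l =>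
    ∑ i : Fin N, ι (a i l) * X (Sum.inr i)
  have hIJ : Ideal.map ι I ≤ J := map_le_symIdeal I a
  have hιI : ∀ x ∈ I, ι x ∈ J := fun x hx => hIJ (Ideal.mem_map_of_mem ι hx)
  have hLJ : ∀ l, L l ∈ J := fun l =>
    (le_sup_right : _ ≤ symIdeal I a) (Ideal.subset_span ⟨l, rfl⟩)
  have hι2 : ∀ x ∈ I ^ 2, ι x ∈ J ^ 2 := by
    intro x hx
    have := Ideal.mem_map_of_mem ι hx
    rw [Ideal.map_pow] at this
    exact Ideal.pow_right_mono hIJ 2 this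
  have hpl : ∀ j p, pderiv (Sum.inl j) (ι p) = ι (pderiv j p) := fun j p =>
    pderiv_rename Sum.inl_injective j p
  have hpr : ∀ i p, pderiv (Sum.inr i) (ι p) = 0 := fun i p => pderiv_inr_rename_inl i p
  let s0 : Fin n ⊕ Fin N → MvPolynomial (Fin n ⊕ Fin N) A :=
    Sum.elim (fun _ => 0) (fun i => ∑ l, ι (b l i) * L l)
  let s1 : Fin n ⊕ Fin N → MvPolynomial (Fin n ⊕ Fin N) A :=
    Sum.elim (fun j => ι (∑ i, σ i j * f i)) (fun _ => 0)
  have hs0 : ∀ v, s0 v ∈ J := by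
    rintro (j | i)
    · exact J.zero_mem
    · exact J.sum_mem fun l _ => J.mul_mem_left _ (hLJ l)
  have hs1 : ∀ v, s1 v ∈ J := by
    rintro (j | i)
    · exact hιI _ (I.sum_mem fun i _ => I.mul_mem_left _ (hf i))
    · exact J.zero_mem
  -- the two operators
  have hE1 : ∀ F ∈ Ideal.map ι I ⊔ J ^ 2, splitOp (ι g) s1 F ∈ J ^ 2 := by
    intro F hF
    obtain ⟨x, hx, y, hy, rfl⟩ := Submodule.mem_sup.mp hF
    rw [splitOp_add]
    refine (J ^ 2).add_mem ?_ (splitOp_mem_sq hs1 hy)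
    refine splitOp_span_mem hs1 hIJ le_rfl ?_ hx
    rintro _ ⟨p, hp, rfl⟩
    have h1 := hι2 _ (D1 p hp)
    convert h1 using 1
    simp only [splitOp, Fintype.sum_sum_type, s1, Sum.elim_inl, Sum.elim_inr, mul_zero,
      Finset.sum_const_zero, add_zero, map_sub, map_mul, map_sum]
    congr 1
    exact Finset.sum_congr rfl fun j _ => by
      erw [hpl]
  have hkey := splitting_key I a f σ b hf D3 D4
  have hE0 : ∀ F ∈ J, splitOp (ι g) s0 F ∈ Ideal.map ι I ⊔ J ^ 2 := by
    intro F hF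
    obtain ⟨x, hx, y, hy, rfl⟩ := Submodule.mem_sup.mp hF
    rw [splitOp_add]
    refine Ideal.add_mem _ ?_ ?_
    · refine splitOp_span_mem hs0 hIJ le_sup_right ?_ hx
      rintro _ ⟨p, hp, rfl⟩
      refine Ideal.mem_sup_left ?_
      have h1 : splitOp (ι g) s0 (ι p) = ι g * ι p := by
        simp [splitOp, Fintype.sum_sum_type, s0, hpr]
      erw [h1]
      exact Ideal.mul_mem_left _ _ (Ideal.mem_map_of_mem ι hp)
    · refine splitOp_span_mem hs0 (le_sup_right : _ ≤ symIdeal I a) le_sup_right ?_ hy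
      rintro _ ⟨l, rfl⟩
      refine Ideal.mem_sup_left ?_
      have hder : ∀ i, pderiv (Sum.inr i) (L l) = ι (a i l) := by
        intro i
        simp only [L, map_sum, Derivation.leibniz, hpr, pderiv_X, smul_eq_mul, mul_zero, add_zero]
        rw [Finset.sum_eq_single i]
        · simp
        · intro c _ hc
          simp [hc]
        · simp
      have h1 : splitOp (ι g) s0 (L l) = ∑ i', ι (g * a i' l -
          ∑ i, a i l * ∑ l', b l' i * a i' l') * X (Sum.inr i') := by
        simp only [splitOp, Fintype.sum_sum_type, s0, Sum.elim_inl, Sum.elim_inr, mul_zero,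
          Finset.sum_const_zero, zero_add, hder, map_sub, map_mul, map_sum, sub_mul,
          Finset.sum_sub_distrib]
        congr 1
        · simp only [L, Finset.mul_sum]
          exact Finset.sum_congr rfl fun i _ => by ring
        · simp only [L, Finset.mul_sum, Finset.sum_mul]
          conv_rhs => rw [Finset.sum_comm]
          refine Finset.sum_congr rfl fun i _ => ?_
          rw [Finset.sum_comm]
          exact Finset.sum_congr rfl fun l _ => Finset.sum_congr rfl fun i _ => by ring
      change splitOp (ι g) s0 (L l) ∈ _
      rw [h1]
      exact Ideal.sum_mem _ fun i' _ => Ideal.mul_mem_right _ _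
        (Ideal.mem_map_of_mem ι (hkey l i'))
  rw [mem_splitIdeal]
  refine ⟨fun v => ι g * s1 v + splitOp (ι g) s1 (s0 v), fun v => ?_, fun F hF => ?_⟩
  · exact J.add_mem (J.mul_mem_left _ (hs1 v)) (splitOp_mem hs1 (hs0 v))
  · have h1 := hE1 _ (hE0 F hF)
    have h2 : ∑ v, (splitOp (ι g) s1 (pderiv v F * s0 v) -
        pderiv v F * splitOp (ι g) s1 (s0 v)) ∈ J ^ 2 :=
      Ideal.sum_mem _ fun v _ => splitOp_mul_sub_mem hs1 _ (hs0 v)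
    have h3 : splitOp (ι g) s1 (ι g * F) - ι g * splitOp (ι g) s1 F ∈ J ^ 2 :=
      splitOp_mul_sub_mem hs1 _ hF
    have hsum : ∀ (t : Finset (Fin n ⊕ Fin N)) (u : Fin n ⊕ Fin N → MvPolynomial (Fin n ⊕ Fin N) A),
        splitOp (ι g) s1 (∑ v ∈ t, u v) = ∑ v ∈ t, splitOp (ι g) s1 (u v) := by
      intro t u
      exact map_sum (⟨⟨splitOp (ι g) s1, splitOp_zero _ _⟩, splitOp_add _ _⟩ :
        MvPolynomial (Fin n ⊕ Fin N) A →+ MvPolynomial (Fin n ⊕ Fin N) A) u t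
    have h4 : splitOp (ι g) s1 (splitOp (ι g) s0 F) = splitOp (ι g) s1 (ι g * F) -
        ∑ v, splitOp (ι g) s1 (pderiv v F * s0 v) := by
      rw [← hsum, eq_sub_iff_add_eq, ← splitOp_add]
      congr 1
      simp only [splitOp]; ring
    have h5 := (J ^ 2).add_mem ((J ^ 2).sub_mem h1 h3) h2
    convert h5 using 1
    rw [h4]
    change ι g ^ 2 * F - _ = _
    have h6 : splitOp (ι g) s1 F = ι g * F - ∑ v, pderiv v F * s1 v := rfl
    have h7 : ∑ v, pderiv v F * (ι g * s1 v + splitOp (ι g) s1 (s0 v)) =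
        ι g * ∑ v, pderiv v F * s1 v + ∑ v, pderiv v F * splitOp (ι g) s1 (s0 v) := by
      rw [Finset.mul_sum, ← Finset.sum_add_distrib]
      exact Finset.sum_congr rfl fun v _ => by ring
    rw [h7, h6, Finset.sum_sub_distrib]
    ring

lemma derivation_mk_eq {A : Type*} [CommRing A] {σ : Type*} [Fintype σ]
    {Q M : Type*} [CommRing Q] [Algebra A Q] [AddCommGroup M] [Module A M] [Module Q M]
    (D : Derivation A Q M)
    (p : MvPolynomial σ A →ₐ[A] Q) (F : MvPolynomial σ A) :
    D (p F) = ∑ v, p (pderiv v F) • D (p (X v)) := by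
  classical
  induction F using MvPolynomial.induction_on with
  | C a =>
    have : p (C a) = algebraMap A Q a := p.commutes a
    rw [this, Derivation.map_algebraMap]
    simp
  | add p q hp hq => simp only [map_add, hp, hq, add_smul, Finset.sum_add_distrib]
  | mul_X p i hp =>
    simp only [map_mul, Derivation.leibniz, hp, smul_eq_mul, map_add, add_smul,
      Finset.sum_add_distrib, pderiv_X]
    congr 1
    · rw [Finset.sum_eq_single i]
      · simp
      · intro c _ hc
        simp [Ne.symm hc]
      · simp
    · rw [Finset.smul_sum]
      exact Finset.sum_congr rfl fun v _ => by rw [mul_smul]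

lemma exists_kaehler_lift {A : Type*} [CommRing A] {σ : Type*} [Fintype σ]
    {Q : Type*} [CommRing Q] [Algebra A Q]
    (p : MvPolynomial σ A →ₐ[A] Q) (hp : Function.Surjective p)
    {M : Type*} [AddCommGroup M] [Module Q M]
    (x : σ → M) (h : ∀ F, p F = 0 → ∑ v, p (pderiv v F) • x v = 0) :
    ∃ φ : Ω[Q⁄A] →ₗ[Q] M, ∀ v, φ (KaehlerDifferential.D A Q (p (X v))) = x v := by
  classical
  let _ : Module A M := Module.compHom M (algebraMap A Q)
  have : IsScalarTower A Q M := ⟨fun c y z => by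
    change (c • y) • z = (algebraMap A Q c) • y • z
    rw [Algebra.smul_def, mul_smul]⟩
  let δ : MvPolynomial σ A → M := fun F => ∑ v, p (pderiv v F) • x v
  have δadd : ∀ F G, δ (F + G) = δ F + δ G := fun F G => by
    simp only [δ, map_add, add_smul, Finset.sum_add_distrib]
  have δmul : ∀ F G, δ (F * G) = p F • δ G + p G • δ F :=
    fun F G => by
      simp only [δ, Derivation.leibniz, map_add, add_smul, Finset.sum_add_distrib, smul_eq_mul,
        map_mul, mul_smul, Finset.smul_sum]
  have δC : ∀ c, δ (C c) = 0 := fun c => by simp [δ]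
  have δeq : ∀ F G, p F = p G → δ F = δ G := by
    intro F G hFG
    have h1 := h (F - G) (by rw [map_sub, hFG, sub_self])
    have h2 : δ F = δ (F - G) + δ G := by rw [← δadd, sub_add_cancel]
    rw [h2]
    change (∑ v, p (pderiv v (F - G)) • x v) + _ = _
    rw [h1, zero_add]
  let r : Q → MvPolynomial σ A := Function.surjInv hp
  have hr : ∀ y, p (r y) = y := Function.surjInv_eq _
  let d : Derivation A Q M :=
    { toFun := fun y => δ (r y)
      map_add' := fun y z => by
        rw [← δadd]; apply δeq; rw [map_add, hr, hr, hr]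
      map_smul' := fun c y => by
        have h1 : δ (r (c • y)) = δ (C c * r y) := by
          apply δeq
          rw [map_mul, hr, hr, Algebra.smul_def]
          congr 1
          exact (p.commutes c).symm
        rw [h1, δmul, δC, smul_zero, add_zero]
        have h2 : p (C c) = algebraMap A Q c := p.commutes c
        rw [h2]
        rfl
      map_one_eq_zero' := by
        change δ (r 1) = 0
        rw [← δC 1]; apply δeq; rw [hr]; simp
      leibniz' := fun y z => by
        change δ (r (y * z)) = y • δ (r z) + z • δ (r y)
        have h1 : δ (r (y * z)) = δ (r y * r z) := by
          apply δeq; rw [map_mul, hr, hr, hr]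
        rw [h1, δmul, hr, hr] }
  refine ⟨d.liftKaehlerDifferential, fun v => ?_⟩
  rw [Derivation.liftKaehlerDifferential_comp_D]
  change δ (r _) = _
  rw [δeq _ (X v) (hr _)]
  simp only [δ, pderiv_X]
  rw [Finset.sum_eq_single v]
  · simp
  · intro c _ hc
    simp [Ne.symm hc]
  · simp

lemma free_of_matrix_data {R M : Type*} [CommRing R] [AddCommGroup M] [Module R M] {n N m : ℕ}
    (F : Matrix (Fin n) (Fin N) R) (S : Matrix (Fin N) (Fin n) R)
    (a : Matrix (Fin N) (Fin m) R) (b : Matrix (Fin m) (Fin N) R)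
    (W : Matrix (Fin n) (Fin m) R)
    (hFS : F * S * F = F) (hSF : 1 - S * F = a * b)
    (dY : Fin n → M) (dT : Fin N → M)
    (h1 : ∀ i, ∑ j, F j i • dY j = 0)
    (h2 : ∀ l, ∑ j, W j l • dY j + ∑ i, a i l • dT i = 0)
    (h3 : Submodule.span R (Set.range dY ∪ Set.range dT) = ⊤)
    (Ψ : M →ₗ[R] (Fin n → R))
    (hY : ∀ j, Ψ (dY j) = (1 - F * S).col j)
    (hT : ∀ i, Ψ (dT i) = (F - (1 - F * S) * W * (b * a * b)).col i) :
    Module.Free R M := by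
  classical
  let ΛY : (Fin n → R) →ₗ[R] M := Fintype.linearCombination R dY
  let ΛT : (Fin N → R) →ₗ[R] M := Fintype.linearCombination R dT
  have eY : ∀ j, ΛY (Pi.single j 1) = dY j := fun j => by
    simp [ΛY, Fintype.linearCombination_apply_single]
  have eT : ∀ j, ΛT (Pi.single j 1) = dT j := fun j => by
    simp [ΛT, Fintype.linearCombination_apply_single]
  have hF : ∀ v, ΛY (F.mulVec v) = 0 := by
    intro v
    have : ΛY ∘ₗ F.mulVecLin = 0 := by
      refine LinearMap.pi_ext' fun i => LinearMap.ext_ring ?_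
      simp [ΛY, Fintype.linearCombination_apply, Matrix.col_apply, h1]
    exact LinearMap.congr_fun this v
  have hW : ∀ v, ΛY (W.mulVec v) + ΛT (a.mulVec v) = 0 := by
    intro v
    have : ΛY ∘ₗ W.mulVecLin + ΛT ∘ₗ a.mulVecLin = 0 := by
      refine LinearMap.pi_ext' fun i => LinearMap.ext_ring ?_
      simp [ΛY, ΛT, Fintype.linearCombination_apply, Matrix.col_apply, h2]
    exact LinearMap.congr_fun this v
  have hΨY : ∀ v, Ψ (ΛY v) = (1 - F * S).mulVec v := by
    intro v
    have : Ψ ∘ₗ ΛY = (1 - F * S).mulVecLin := by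
      refine LinearMap.pi_ext' fun i => LinearMap.ext_ring ?_
      simp only [LinearMap.comp_apply, LinearMap.single_apply, eY, hY, Matrix.mulVecLin_apply,
        Matrix.mulVec_single_one]
    exact LinearMap.congr_fun this v
  have hΨT : ∀ v, Ψ (ΛT v) = (F - (1 - F * S) * W * (b * a * b)).mulVec v := by
    intro v
    have : Ψ ∘ₗ ΛT = (F - (1 - F * S) * W * (b * a * b)).mulVecLin := by
      refine LinearMap.pi_ext' fun i => LinearMap.ext_ring ?_
      simp only [LinearMap.comp_apply, LinearMap.single_apply, eT, hT, Matrix.mulVecLin_apply,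
        Matrix.mulVec_single_one]
    exact LinearMap.congr_fun this v
  let Φ : (Fin n → R) →ₗ[R] M := ΛY + ΛT ∘ₗ (S * F * S).mulVecLin
  have hΦ : ∀ v, Φ v = ΛY v + ΛT ((S * F * S).mulVec v) := fun v => rfl
  have habS : a * b * (S * F) = 0 := by
    rw [← hSF, Matrix.sub_mul, Matrix.one_mul, Matrix.mul_assoc, ← Matrix.mul_assoc F S F, hFS,
      sub_self]
  have hab2 : a * (b * a * b) = 1 - S * F := by
    have : a * (b * a * b) = a * b * (a * b) := by simp only [Matrix.mul_assoc]
    rw [this]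
    nth_rewrite 2 [← hSF]
    rw [Matrix.mul_sub, habS, sub_zero, Matrix.mul_one, hSF]
  have left : ∀ v, Ψ (Φ v) = v := by
    intro v
    rw [hΦ, map_add, hΨY, hΨT, Matrix.mulVec_mulVec, ← Matrix.add_mulVec]
    have : (1 - F * S) + (F - (1 - F * S) * W * (b * a * b)) * (S * F * S) = 1 := by
      have e1 : F * (S * F * S) = F * S := by
        rw [← Matrix.mul_assoc, ← Matrix.mul_assoc, hFS]
      have e2 : (1 - F * S) * W * (b * a * b) * (S * F * S) = 0 := by
        have : (1 - F * S) * W * (b * a * b) * (S * F * S) =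
            (1 - F * S) * W * b * (a * b * (S * F)) * S := by
          simp only [Matrix.mul_assoc]
        rw [this, habS]; simp
      rw [Matrix.sub_mul, e1, e2]; simp
    rw [this, Matrix.one_mulVec]
  have right : ∀ x, Φ (Ψ x) = x := by
    have : Φ ∘ₗ Ψ = LinearMap.id := by
      refine LinearMap.ext_on h3 ?_
      rintro _ (⟨j, rfl⟩ | ⟨i, rfl⟩)
      · rw [← eY]
        generalize (Pi.single j 1 : Fin n → R) = v
        rw [LinearMap.comp_apply, hΨY, hΦ, Matrix.mulVec_mulVec]
        have e1 : S * F * S * (1 - F * S) = 0 := by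
          rw [Matrix.mul_sub, Matrix.mul_one]
          have : S * F * S * (F * S) = S * (F * S * F) * S := by simp only [Matrix.mul_assoc]
          rw [this, hFS, sub_self]
        rw [e1, Matrix.sub_mulVec, Matrix.one_mulVec, map_sub, ← Matrix.mulVec_mulVec, hF]
        simp
      · rw [← eT]
        generalize (Pi.single i 1 : Fin N → R) = v
        rw [LinearMap.comp_apply, hΨT, hΦ, Matrix.mulVec_mulVec]
        have e1 : S * F * S * (F - (1 - F * S) * W * (b * a * b)) = S * F := by
          rw [Matrix.mul_sub]
          have e2 : S * F * S * F = S * F := by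
            have : S * F * S * F = S * (F * S * F) := by simp only [Matrix.mul_assoc]
            rw [this, hFS]
          have e3 : S * F * S * ((1 - F * S) * W * (b * a * b)) = 0 := by
            have e4 : S * F * S * (1 - F * S) = 0 := by
              rw [Matrix.mul_sub, Matrix.mul_one]
              have : S * F * S * (F * S) = S * (F * S * F) * S := by simp only [Matrix.mul_assoc]
              rw [this, hFS, sub_self]
            have e6 : S * F * S * ((1 - F * S) * W * (b * a * b)) =
                S * F * S * (1 - F * S) * (W * (b * a * b)) := by
              rw [Matrix.mul_assoc (1 - F * S), ← Matrix.mul_assoc (S * F * S)]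
            rw [e6, e4, Matrix.zero_mul]
          rw [e2, e3, sub_zero]
        have e5 : F - (1 - F * S) * W * (b * a * b) =
            F * (1 + S * W * (b * a * b)) - W * (b * a * b) := by
          simp only [Matrix.sub_mul, Matrix.mul_add, Matrix.one_mul, Matrix.mul_one,
            Matrix.mul_assoc]
          abel
        rw [e1, e5, Matrix.sub_mulVec, map_sub, ← Matrix.mulVec_mulVec, hF, zero_sub,
          ← Matrix.mulVec_mulVec, neg_eq_of_add_eq_zero_right (hW _), Matrix.mulVec_mulVec, hab2,
          ← map_add, ← Matrix.add_mulVec]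
        simp
    exact fun x => LinearMap.congr_fun this x
  exact Module.Free.of_equiv (LinearEquiv.ofLinearMap Φ Ψ (LinearMap.ext right) (LinearMap.ext left))

lemma sum_pderiv_smul_eq_zero {A : Type*} [CommRing A] {σ : Type*} [Fintype σ]
    {R M : Type*} [CommRing R] [AddCommGroup M] [Module R M]
    (θ : MvPolynomial σ A →+* R) (x : σ → M) (S : Set (MvPolynomial σ A))
    (hθ : ∀ F ∈ Ideal.span S, θ F = 0)
    (h : ∀ F ∈ S, ∑ v, θ (pderiv v F) • x v = 0)
    {F : MvPolynomial σ A} (hF : F ∈ Ideal.span S) :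
    ∑ v, θ (pderiv v F) • x v = 0 := by
  refine Submodule.span_induction (p := fun F _ => ∑ v, θ (pderiv v F) • x v = 0) h ?_ ?_ ?_ hF
  · simp
  · intro F G _ _ hF hG
    simp only [map_add, add_smul, Finset.sum_add_distrib, hF, hG, add_zero]
  · intro c G hG hG0
    simp only [smul_eq_mul, Derivation.leibniz, map_add, map_mul, hθ G hG, zero_mul, add_zero,
      mul_smul, ← Finset.smul_sum, hG0, smul_zero]

section relations

variable {A : Type*} [CommRing A] {n N m : ℕ} {R : Type*} [CommRing R]
    (I : Ideal (MvPolynomial (Fin n) A))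
    (a : Fin N → Fin m → MvPolynomial (Fin n) A)
    {g : MvPolynomial (Fin n) A}
    (f : Fin N → MvPolynomial (Fin n) A) (σ : Fin N → Fin n → MvPolynomial (Fin n) A)
    (b : Fin m → Fin N → MvPolynomial (Fin n) A)
    (ψ : MvPolynomial (Fin n) A →+* R) (w : R) (t : Fin N → R)

lemma rel_one (hf : ∀ i, f i ∈ I) (hψ : ∀ h ∈ I, ψ h = 0)
    (D3 : ∀ l, ∑ i, a i l * f i ∈ I ^ 2) :
    (Matrix.of fun j i => ψ (pderiv j (f i))) * (Matrix.of fun i l => ψ (a i l)) = 0 := by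
  ext j l
  have h2 := hψ _ (pderiv_mem_of_mem_sq (D3 l) j)
  simp only [map_sum, Derivation.leibniz, smul_eq_mul, Finset.sum_add_distrib, map_add, map_mul,
    hψ _ (hf _), zero_mul, Finset.sum_const_zero, add_zero] at h2
  simp only [Matrix.mul_apply, Matrix.of_apply, Matrix.zero_apply]
  rw [← h2]
  exact Finset.sum_congr rfl fun i _ => mul_comm _ _

lemma rel_two (hf : ∀ i, f i ∈ I) (hψ : ∀ h ∈ I, ψ h = 0) (hw : w * ψ g = 1)
    (D1 : ∀ h ∈ I, g * h - ∑ j, pderiv j h * ∑ i, σ i j * f i ∈ I ^ 2) :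
    ∀ h ∈ I, ((Matrix.of fun j i => ψ (pderiv j (f i))) *
      (Matrix.of fun i j => w * ψ (σ i j))).mulVec (fun j => ψ (pderiv j h)) =
        fun j => ψ (pderiv j h) := by
  intro h hh
  ext k
  have h2 := hψ _ (pderiv_mem_of_mem_sq (D1 h hh) k)
  simp only [map_sub, map_sum, Derivation.leibniz, smul_eq_mul, Finset.sum_add_distrib, map_add,
    map_mul, hψ _ (hf _), hψ _ hh, zero_mul, mul_zero, Finset.sum_const_zero, add_zero] at h2
  have h3 : ψ (pderiv k h) = w * ∑ j, ψ (pderiv j h) * ∑ i, ψ (σ i j) * ψ (pderiv k (f i)) := by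
    rw [← sub_eq_zero.mp h2, ← mul_assoc, hw, one_mul]
  rw [← Matrix.mulVec_mulVec, h3]
  simp only [Matrix.mulVec, dotProduct, Matrix.of_apply]
  simp only [Finset.mul_sum]
  rw [Finset.sum_comm]
  exact Finset.sum_congr rfl fun i _ => Finset.sum_congr rfl fun j _ => by ring

lemma rel_three (hψ : ∀ h ∈ I, ψ h = 0) (hw : w * ψ g = 1)
    (D4 : ∀ i' i, (if i' = i then g else 0) - ∑ j, σ i' j * pderiv j (f i)
        - ∑ l, a i' l * b l i ∈ I) :
    1 - (Matrix.of fun i j => w * ψ (σ i j)) * (Matrix.of fun j i => ψ (pderiv j (f i))) =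
      (Matrix.of fun i l => ψ (a i l)) * (Matrix.of fun l i => w * ψ (b l i)) := by
  ext i' i
  have h2 := hψ _ (D4 i' i)
  rw [map_sub, map_sub, apply_ite ψ, map_zero, sub_eq_zero] at h2
  have h3 := congrArg (w * ·) h2
  simp only [mul_sub, mul_ite, hw, mul_zero, map_sum, map_mul, Finset.mul_sum] at h3
  simp only [Matrix.sub_apply, Matrix.one_apply, Matrix.mul_apply, Matrix.of_apply, mul_assoc]
  rw [h3]
  exact Finset.sum_congr rfl fun i _ => by ring

lemma rel_four (hf : ∀ i, f i ∈ I) (hψ : ∀ h ∈ I, ψ h = 0) (hw : w * ψ g = 1)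
    (ht : ∀ l, ∑ i, ψ (a i l) * t i = 0)
    (D1 : ∀ h ∈ I, g * h - ∑ j, pderiv j h * ∑ i, σ i j * f i ∈ I ^ 2)
    (D3 : ∀ l, ∑ i, a i l * f i ∈ I ^ 2)
    (D4 : ∀ i' i, (if i' = i then g else 0) - ∑ j, σ i' j * pderiv j (f i)
        - ∑ l, a i' l * b l i ∈ I) :
    (1 - (Matrix.of fun j i => ψ (pderiv j (f i))) * (Matrix.of fun i j => w * ψ (σ i j))) *
      (Matrix.of fun j l => ∑ i, t i * ψ (pderiv j (a i l))) *
      (1 - (Matrix.of fun l i => w * ψ (b l i)) * (Matrix.of fun i l => ψ (a i l))) = 0 := by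
  have hkey := splitting_key I a f σ b hf D3 D4
  set E := (Matrix.of fun j i => ψ (pderiv j (f i))) * (Matrix.of fun i j => w * ψ (σ i j))
    with hE
  have h2 : ∀ h ∈ I, E.mulVec (fun j => ψ (pderiv j h)) = fun j => ψ (pderiv j h) :=
    rel_two I f σ ψ w hf hψ hw D1
  let z : Fin N → Fin m → MvPolynomial (Fin n) A := fun i' l =>
    g * a i' l - ∑ i, a i l * ∑ l', b l' i * a i' l'
  let Z : Matrix (Fin n) (Fin m) R := Matrix.of fun j l => ∑ i, t i * ψ (pderiv j (z i l))
  have hZ : (Matrix.of fun j l => ∑ i, t i * ψ (pderiv j (a i l))) *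
      (1 - (Matrix.of fun l i => w * ψ (b l i)) * (Matrix.of fun i l => ψ (a i l))) =
      w • Z := by
    ext j l
    have e1 : ∀ i', ψ (pderiv j (z i' l)) = ψ g * ψ (pderiv j (a i' l)) +
        ψ (a i' l) * ψ (pderiv j g) -
        (∑ i, ψ (a i l) * ∑ l', ψ (b l' i) * ψ (pderiv j (a i' l')) +
          ∑ l', ψ (a i' l') * ∑ i, (ψ (a i l) * ψ (pderiv j (b l' i)) +
            ψ (b l' i) * ψ (pderiv j (a i l)))) := by
      intro i'
      have e2 : ∑ i, a i l * ∑ l', b l' i * a i' l' = ∑ l', a i' l' * ∑ i, a i l * b l' i := by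
        simp only [Finset.mul_sum]
        rw [Finset.sum_comm]
        exact Finset.sum_congr rfl fun i _ => Finset.sum_congr rfl fun j _ => by ring
      simp only [z]
      rw [e2]
      simp only [map_sub, map_sum, Derivation.leibniz, smul_eq_mul, Finset.sum_add_distrib,
        map_add, map_mul]
      have e3 : ∑ i, ψ (a i l) * ∑ l', ψ (b l' i) * ψ (pderiv j (a i' l')) =
          ∑ l', (∑ i, ψ (a i l) * ψ (b l' i)) * ψ (pderiv j (a i' l')) := by
        simp only [Finset.mul_sum, Finset.sum_mul]
        rw [Finset.sum_comm]
        exact Finset.sum_congr rfl fun i _ => Finset.sum_congr rfl fun j _ => by ring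
      rw [e3]
      ring
    have e4 : ∀ c : Fin m → R, ∑ i', t i' * ∑ l', ψ (a i' l') * c l' = 0 := by
      intro c
      have : ∑ i', t i' * ∑ l', ψ (a i' l') * c l' = ∑ l', c l' * ∑ i', ψ (a i' l') * t i' := by
        simp only [Finset.mul_sum]
        rw [Finset.sum_comm]
        exact Finset.sum_congr rfl fun i _ => Finset.sum_congr rfl fun j _ => by ring
      rw [this]
      simp [ht]
    have e5 : ∑ i', t i' * (ψ (a i' l) * ψ (pderiv j g)) = 0 := by
      have : ∑ i', t i' * (ψ (a i' l) * ψ (pderiv j g)) =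
          (∑ i', ψ (a i' l) * t i') * ψ (pderiv j g) := by
        rw [Finset.sum_mul]
        exact Finset.sum_congr rfl fun i _ => by ring
      rw [this, ht, zero_mul]
    have e6 : Z j l = ψ g * ∑ i', t i' * ψ (pderiv j (a i' l)) -
        ∑ i', t i' * ∑ i, ψ (a i l) * ∑ l', ψ (b l' i) * ψ (pderiv j (a i' l')) := by
      simp only [Z, Matrix.of_apply, e1, mul_sub, mul_add, Finset.sum_sub_distrib,
        Finset.sum_add_distrib, e5]
      simp only [e4, add_zero]
      rw [Finset.mul_sum]
      congr 1
      exact Finset.sum_congr rfl fun i _ => by ring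
    rw [Matrix.smul_apply, e6, smul_eq_mul, mul_sub, ← mul_assoc, hw, one_mul, Matrix.mul_sub,
      Matrix.mul_one, Matrix.sub_apply]
    congr 1
    simp only [Matrix.mul_apply, Matrix.of_apply, Finset.sum_mul_sum]
    simp only [Finset.mul_sum]
    rw [Finset.sum_comm]
    refine Finset.sum_congr rfl fun i' _ => ?_
    rw [Finset.sum_comm]
    exact Finset.sum_congr rfl fun i _ => Finset.sum_congr rfl fun l' _ => by ring
  rw [Matrix.mul_assoc, hZ, Matrix.mul_smul]
  have : (1 - E) * Z = 0 := by
    ext j l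
    have e7 : (1 - E).mulVec (fun j => Z j l) = 0 := by
      have : (fun j => Z j l) = ∑ i, t i • (fun j => ψ (pderiv j (z i l))) := by
        ext j; simp [Z]
      rw [this, Matrix.mulVec_sum]
      refine Finset.sum_eq_zero fun i _ => ?_
      rw [Matrix.mulVec_smul, Matrix.sub_mulVec, Matrix.one_mulVec, h2 _ (hkey l i), sub_self,
        smul_zero]
    exact congrFun e7 j
  rw [this, smul_zero]

end relations

lemma pderiv_linear_form {A : Type*} [CommRing A] {n N m : ℕ}
    (a : Fin N → Fin m → MvPolynomial (Fin n) A) (l : Fin m) :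
    (∀ j, pderiv (Sum.inl j) (∑ i : Fin N, rename Sum.inl (a i l) *
      (X (Sum.inr i) : MvPolynomial (Fin n ⊕ Fin N) A)) =
        ∑ i : Fin N, X (Sum.inr i) * rename Sum.inl (pderiv j (a i l))) ∧
    (∀ i', pderiv (Sum.inr i') (∑ i : Fin N, rename Sum.inl (a i l) *
      (X (Sum.inr i) : MvPolynomial (Fin n ⊕ Fin N) A)) = rename Sum.inl (a i' l)) := by
  classical
  constructor
  · intro j
    rw [map_sum]
    refine Finset.sum_congr rfl fun i _ => ?_
    rw [Derivation.leibniz, pderiv_rename Sum.inl_injective, pderiv_X_of_ne (by simp)]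
    simp
  · intro i
    simp only [map_sum, Derivation.leibniz, pderiv_inr_rename_inl, pderiv_X, smul_eq_mul,
      mul_zero, add_zero]
    rw [Finset.sum_eq_single i]
    · simp
    · intro c _ hc
      simp [hc]
    · simp

lemma free_aux {A : Type*} [CommRing A] {n N m : ℕ}
    (I : Ideal (MvPolynomial (Fin n) A))
    (a : Fin N → Fin m → MvPolynomial (Fin n) A)
    {g : MvPolynomial (Fin n) A}
    (f : Fin N → MvPolynomial (Fin n) A) (σ : Fin N → Fin n → MvPolynomial (Fin n) A)
    (b : Fin m → Fin N → MvPolynomial (Fin n) A)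
    (hf : ∀ i, f i ∈ I)
    (D1 : ∀ h ∈ I, g * h - ∑ j, pderiv j h * ∑ i, σ i j * f i ∈ I ^ 2)
    (D3 : ∀ l, ∑ i, a i l * f i ∈ I ^ 2)
    (D4 : ∀ i' i, (if i' = i then g else 0) - ∑ j, σ i' j * pderiv j (f i)
        - ∑ l, a i' l * b l i ∈ I)
    {Q : Type*} [CommRing Q] [Algebra A Q] (p : MvPolynomial (Fin n ⊕ Fin N) A →ₐ[A] Q)
    (hp : Function.Surjective p) (hpk : ∀ F, p F = 0 ↔ F ∈ symIdeal I a)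
    (γ : Q) (k : ℕ) (hγ : p (rename Sum.inl g) = γ ^ k)
    {R : Type*} [CommRing R] [Algebra Q R] [IsLocalization (Submonoid.powers γ) R]
    {M : Type*} [AddCommGroup M] [Module Q M] [Module R M] [IsScalarTower Q R M]
    (l : Ω[Q⁄A] →ₗ[Q] M) [IsLocalizedModule (Submonoid.powers γ) l] :
    Module.Free R M := by
  classical
  let θ : MvPolynomial (Fin n ⊕ Fin N) A →+* R := (algebraMap Q R).comp p.toRingHom
  have hθ : ∀ F, θ F = algebraMap Q R (p F) := fun F => rfl
  let ψ : MvPolynomial (Fin n) A →+* R := θ.comp (rename Sum.inl).toRingHom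
  have hψθ : ∀ h, θ (rename Sum.inl h) = ψ h := fun h => rfl
  have hθJ : ∀ F ∈ symIdeal I a, θ F = 0 := fun F hF => by
    rw [hθ, (hpk F).mpr hF, map_zero]
  have hIJ : ∀ h ∈ I, rename Sum.inl h ∈ symIdeal I a := fun h hh =>
    map_le_symIdeal I a (Ideal.mem_map_of_mem _ hh)
  have hψ : ∀ h ∈ I, ψ h = 0 := fun h hh => hθJ _ (hIJ h hh)
  let L : Fin m → MvPolynomial (Fin n ⊕ Fin N) A := fun l =>
    ∑ i : Fin N, rename Sum.inl (a i l) * X (Sum.inr i)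
  have hL : ∀ l, L l ∈ symIdeal I a := fun l =>
    (le_sup_right : _ ≤ symIdeal I a) (Ideal.subset_span ⟨l, rfl⟩)
  let t : Fin N → R := fun i => θ (X (Sum.inr i))
  have ht : ∀ l, ∑ i, ψ (a i l) * t i = 0 := by
    intro l
    have := hθJ _ (hL l)
    simpa only [L, map_sum, map_mul, hψθ] using this
  have hunit : IsUnit (ψ g) := by
    have : ψ g = algebraMap Q R γ ^ k := by
      rw [← hψθ, hθ, hγ, map_pow]
    rw [this]
    exact (IsLocalization.map_units R (⟨γ, Submonoid.mem_powers γ⟩ : Submonoid.powers γ)).pow k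
  obtain ⟨w, hw⟩ := hunit.exists_left_inv
  let F : Matrix (Fin n) (Fin N) R := Matrix.of fun j i => ψ (pderiv j (f i))
  let S : Matrix (Fin N) (Fin n) R := Matrix.of fun i j => w * ψ (σ i j)
  let Am : Matrix (Fin N) (Fin m) R := Matrix.of fun i l => ψ (a i l)
  let Bm : Matrix (Fin m) (Fin N) R := Matrix.of fun l i => w * ψ (b l i)
  let W : Matrix (Fin n) (Fin m) R := Matrix.of fun j l => ∑ i, t i * ψ (pderiv j (a i l))
  have R1 : F * Am = 0 := rel_one I a f ψ hf hψ D3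
  have R2 : ∀ h ∈ I, (F * S).mulVec (fun j => ψ (pderiv j h)) = fun j => ψ (pderiv j h) :=
    rel_two I f σ ψ w hf hψ hw D1
  have R3 : 1 - S * F = Am * Bm := rel_three I a f σ b ψ w hψ hw D4
  have R4 : (1 - F * S) * W * (1 - Bm * Am) = 0 :=
    rel_four I a f σ b ψ w t hf hψ hw ht D1 D3 D4
  have R5 : F * S * F = F := by
    ext j i
    exact congrFun (R2 (f i) (hf i)) j
  -- derivatives under `θ`
  have dl : ∀ j h, θ (pderiv (Sum.inl j) (rename Sum.inl h)) = ψ (pderiv j h) := fun j h => by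
    rw [pderiv_rename Sum.inl_injective, hψθ]
  have dr : ∀ i h, θ (pderiv (Sum.inr i) (rename Sum.inl h)) = 0 := fun i h => by
    rw [pderiv_inr_rename_inl, map_zero]
  have Ll : ∀ j l, θ (pderiv (Sum.inl j) (L l)) = W j l := fun j l => by
    simp only [L]
    rw [(pderiv_linear_form a l).1]
    simp only [map_sum, map_mul, hψθ]
    rfl
  have Lr : ∀ i l, θ (pderiv (Sum.inr i) (L l)) = Am i l := fun i l => by
    simp only [L]
    rw [(pderiv_linear_form a l).2, hψθ]
    rfl
  -- the generators of the module
  let D := KaehlerDifferential.D A Q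
  let dY : Fin n → M := fun j => l (D (p (X (Sum.inl j))))
  let dT : Fin N → M := fun i => l (D (p (X (Sum.inr i))))
  have hD : ∀ G, l (D (p G)) = ∑ j, θ (pderiv (Sum.inl j) G) • dY j +
      ∑ i, θ (pderiv (Sum.inr i) G) • dT i := by
    intro G
    rw [derivation_mk_eq D p G, Fintype.sum_sum_type, map_add, map_sum, map_sum]
    simp only [map_smul, hθ, algebraMap_smul]
    rfl
  have h1 : ∀ i, ∑ j, F j i • dY j = 0 := by
    intro i
    have h := hD (rename Sum.inl (f i))
    rw [(hpk _).mpr (hIJ _ (hf i)), map_zero, map_zero] at h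
    simpa [dl, dr, F] using h.symm
  have h2 : ∀ l, ∑ j, W j l • dY j + ∑ i, Am i l • dT i = 0 := by
    intro l'
    have h := hD (L l')
    rw [(hpk _).mpr (hL l'), map_zero, map_zero] at h
    simpa only [Ll, Lr] using h.symm
  have h3 : Submodule.span R (Set.range dY ∪ Set.range dT) = ⊤ := by
    rw [eq_top_iff]
    rintro x -
    obtain ⟨⟨ω, s⟩, hs⟩ := IsLocalizedModule.surj (Submonoid.powers γ) l x
    have hl : ∀ ω, l ω ∈ Submodule.span R (Set.range dY ∪ Set.range dT) := by
      intro ω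
      have hω : ω ∈ Submodule.span Q (Set.range D) := by
        rw [KaehlerDifferential.span_range_derivation]; trivial
      induction hω using Submodule.span_induction with
      | mem x hx =>
        obtain ⟨y, rfl⟩ := hx
        obtain ⟨G, rfl⟩ := hp y
        rw [hD]
        refine Submodule.add_mem _ ?_ ?_
        · exact Submodule.sum_mem _ fun j _ => Submodule.smul_mem _ _
            (Submodule.subset_span (Or.inl ⟨j, rfl⟩))
        · exact Submodule.sum_mem _ fun j _ => Submodule.smul_mem _ _
            (Submodule.subset_span (Or.inr ⟨j, rfl⟩))
      | zero => rw [map_zero]; exact Submodule.zero_mem _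
      | add x y _ _ hx hy => rw [map_add]; exact Submodule.add_mem _ hx hy
      | smul c x _ hx =>
        rw [map_smul, ← algebraMap_smul R c]; exact Submodule.smul_mem _ _ hx
    obtain ⟨s', hs'⟩ := (IsLocalization.map_units R s).exists_left_inv
    have : x = s' • l ω := by
      rw [← hs]
      change x = s' • ((s : Q) • x)
      rw [← algebraMap_smul R (s : Q) x, smul_smul, hs', one_smul]
    rw [this]
    exact Submodule.smul_mem _ _ (hl ω)
  -- the map
  let x : Fin n ⊕ Fin N → (Fin n → R) := Sum.elim (fun j => (1 - F * S).col j)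
    (fun i => (F - (1 - F * S) * W * (Bm * Am * Bm)).col i)
  have hcol : ∀ {q : ℕ} (P : Matrix (Fin n) (Fin q) R) (c : Fin q → R),
      ∑ j, c j • P.col j = P.mulVec c := by
    intro q P c
    ext i
    simp [Matrix.mulVec, dotProduct, mul_comm]
  have hx : ∀ G, ∑ v, θ (pderiv v G) • x v =
      (1 - F * S).mulVec (fun j => θ (pderiv (Sum.inl j) G)) +
      (F - (1 - F * S) * W * (Bm * Am * Bm)).mulVec (fun i => θ (pderiv (Sum.inr i) G)) := by
    intro G
    rw [Fintype.sum_sum_type]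
    simp only [x, Sum.elim_inl, Sum.elim_inr, hcol]
  have hx0 : ∀ G ∈ symIdeal I a, ∑ v, θ (pderiv v G) • x v = 0 := by
    intro G hG
    obtain ⟨y, hy, z, hz, rfl⟩ := Submodule.mem_sup.mp hG
    simp only [map_add, add_smul, Finset.sum_add_distrib]
    have e1 : ∑ v, θ (pderiv v y) • x v = 0 := by
      refine sum_pderiv_smul_eq_zero θ x _ (fun F hF => hθJ F (map_le_symIdeal I a hF)) ?_ hy
      rintro _ ⟨h, hh, rfl⟩
      rw [hx]
      have e2 : (fun j => θ (pderiv (Sum.inl j) (rename Sum.inl h :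
          MvPolynomial (Fin n ⊕ Fin N) A))) = fun j => ψ (pderiv j h) := funext fun j => dl j h
      have e3 : (fun i => θ (pderiv (Sum.inr i) (rename Sum.inl h :
          MvPolynomial (Fin n ⊕ Fin N) A))) = 0 := funext fun j => dr j h
      erw [e2, e3]
      rw [Matrix.mulVec_zero, add_zero, Matrix.sub_mulVec, R2 h hh, Matrix.one_mulVec, sub_self]
    have e4 : ∑ v, θ (pderiv v z) • x v = 0 := by
      refine sum_pderiv_smul_eq_zero θ x _
        (fun F hF => hθJ F ((le_sup_right : _ ≤ symIdeal I a) hF)) ?_ hz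
      rintro _ ⟨l', rfl⟩
      change ∑ v, θ (pderiv v (L l')) • x v = 0
      rw [hx]
      simp only [Ll, Lr]
      have e5 : (1 - F * S) * W + (F - (1 - F * S) * W * (Bm * Am * Bm)) * Am = 0 := by
        have e6 : (1 - F * S) * W * (Bm * Am) = (1 - F * S) * W := by
          rw [Matrix.mul_sub, Matrix.mul_one, sub_eq_zero] at R4
          exact R4.symm
        rw [Matrix.sub_mul F, R1, zero_sub]
        have e7 : (1 - F * S) * W * (Bm * Am * Bm) * Am =
            (1 - F * S) * W * (Bm * Am) * (Bm * Am) := by simp only [Matrix.mul_assoc]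
        rw [e7, e6, e6, add_neg_cancel]
      ext j
      exact congrFun (congrFun e5 j) l'
    rw [e1, e4, add_zero]
  obtain ⟨φ, hφ⟩ := exists_kaehler_lift p hp x (fun G hG => by
    have := hx0 G ((hpk G).mp hG)
    simpa only [hθ, algebraMap_smul] using this)
  have hu : ∀ s : Submonoid.powers γ, IsUnit (algebraMap Q (Module.End Q (Fin n → R)) s) := by
    intro s
    obtain ⟨s', hs'⟩ := (IsLocalization.map_units R s).exists_left_inv
    rw [Module.End.isUnit_iff]
    refine Function.bijective_iff_has_inverse.mpr ⟨fun y => s' • y, fun y => ?_, fun y => ?_⟩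
    · change s' • ((s : Q) • y) = y
      rw [← algebraMap_smul R (s : Q) y, smul_smul, hs', one_smul]
    · change (s : Q) • (s' • y) = y
      rw [← algebraMap_smul R (s : Q) (s' • y), smul_smul, mul_comm, hs', one_smul]
  let Ψ0 : M →ₗ[Q] (Fin n → R) := IsLocalizedModule.lift (Submonoid.powers γ) l φ hu
  have hΨ0 : ∀ ω, Ψ0 (l ω) = φ ω := fun ω => IsLocalizedModule.lift_apply _ _ _ _ _
  let Ψ : M →ₗ[R] (Fin n → R) :=
    LinearMap.extendScalarsOfIsLocalization (Submonoid.powers γ) R Ψ0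
  exact free_of_matrix_data F S Am Bm W R5 R3 dY dT h1 h2 h3 Ψ
    (fun j => (hΨ0 _).trans (hφ (Sum.inl j))) (fun i => (hΨ0 _).trans (hφ (Sum.inr i)))

lemma exists_splitIdeal_of_mem_HIdeal {A : Type*} [CommRing A] {n : ℕ}
    (I : Ideal (MvPolynomial (Fin n) A)) {γ : MvPolynomial (Fin n) A ⧸ I}
    (hγ : γ ∈ HIdeal (Equiv.refl (Fin n)) I) :
    ∃ (k : ℕ) (g : MvPolynomial (Fin n) A), g ∈ splitIdeal I ∧ Ideal.Quotient.mk I g = γ ^ k := by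
  obtain ⟨k, hk⟩ := Ideal.mem_radical_iff.mp hγ
  obtain ⟨g, hg, hgk⟩ := (Ideal.mem_map_iff_of_surjective _ Ideal.Quotient.mk_surjective).mp hk
  exact ⟨k, g, preHIdeal_le_splitIdeal _ I hg, hgk⟩

/-- Let `A` be a Noetherian ring, `B = A[Y]/I` a finitely presented `A`-algebra with
`Y = (Y₁,…,Yₙ)` and `B₁ = S_B(I/I²)` the symmetric algebra of the conormal module
`I/I²` over `B`, presented (via a presentation `B^m →(a_{ij}) B^N → I/I² → 0` of `I/I²`)
as `B₁ = A[Y,T]/I₁`, `I₁ = symIdeal I a`.  Then `H_{B/A}·B₁ ⊆ H_{B₁/A}`, and for every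
`γ ∈ H_{B/A}` the localization `(Ω_{B₁/A})_γ` of the module of Kähler differentials of
`B₁` over `A` is free over the localization `(B₁)_γ` (realizations of these two
localizations being abstractly quantified). -/
theorem symmetricAlgebra_H_le_and_kaehler_localization_free
    [IsNoetherianRing A] (I : Ideal (MvPolynomial (Fin n) A))
    (a : Fin N → Fin m → MvPolynomial (Fin n) A)
    (π : (Fin N → (MvPolynomial (Fin n) A ⧸ I)) →ₗ[MvPolynomial (Fin n) A ⧸ I] I.Cotangent)
    (hsurj : Function.Surjective π)
    (hker : LinearMap.ker π = Submodule.span (MvPolynomial (Fin n) A ⧸ I)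
      (Set.range fun j : Fin m => fun i : Fin N => Ideal.Quotient.mk I (a i j))) :
    Ideal.map (symMap I a) (HIdeal (Equiv.refl (Fin n)) I) ≤
        HIdeal finSumFinEquiv (symIdeal I a) ∧
      ∀ γ, γ ∈ HIdeal (Equiv.refl (Fin n)) I →
        ∀ (B₁γ : Type v) (_ : CommRing B₁γ)
          (_ : Algebra (MvPolynomial (Fin n ⊕ Fin N) A ⧸ symIdeal I a) B₁γ)
          (_ : IsLocalization (Submonoid.powers (symMap I a γ)) B₁γ)
          (Ωγ : Type v) (_ : AddCommGroup Ωγ)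
          (_ : Module (MvPolynomial (Fin n ⊕ Fin N) A ⧸ symIdeal I a) Ωγ)
          (_ : Module B₁γ Ωγ)
          (_ : IsScalarTower (MvPolynomial (Fin n ⊕ Fin N) A ⧸ symIdeal I a) B₁γ Ωγ)
          (l : (Ω[(MvPolynomial (Fin n ⊕ Fin N) A ⧸ symIdeal I a)⁄A])
            →ₗ[MvPolynomial (Fin n ⊕ Fin N) A ⧸ symIdeal I a] Ωγ)
          (_ : IsLocalizedModule (Submonoid.powers (symMap I a γ)) l),
          Module.Free B₁γ Ωγ := by
  have hsym : ∀ g, symMap I a (Ideal.Quotient.mk I g) =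
      Ideal.Quotient.mk (symIdeal I a) (rename Sum.inl g) := fun g => rfl
  constructor
  · rw [Ideal.map_le_iff_le_comap]
    intro γ hγ
    obtain ⟨k, g, hg, hgk⟩ := exists_splitIdeal_of_mem_HIdeal I hγ
    obtain ⟨f, σ, b, hf, D1, D3, D4⟩ := exists_splitting_data I a π hsurj hker hg
    have h1 := splitIdeal_map_le_HIdeal finSumFinEquiv (symIdeal I a)
      (rename_sq_mem_splitIdeal I a f σ b hf D1 D3 D4)
    rw [map_pow, ← hsym, hgk, map_pow, ← pow_mul] at h1
    rw [Ideal.mem_comap]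
    exact (Ideal.radical_isRadical _).radical_le_iff.mpr le_rfl ⟨_, h1⟩
  · intro γ hγ B₁γ _ _ _ Ωγ _ _ _ _ l _
    obtain ⟨k, g, hg, hgk⟩ := exists_splitIdeal_of_mem_HIdeal I hγ
    obtain ⟨f, σ, b, hf, D1, D3, D4⟩ := exists_splitting_data I a π hsurj hker hg
    exact free_aux I a f σ b hf D1 D3 D4 (Ideal.Quotient.mkₐ A (symIdeal I a))
      (Ideal.Quotient.mkₐ_surjective A _) (fun F => Ideal.Quotient.eq_zero_iff_mem)
      (symMap I a γ) k (by rw [← map_pow, ← hgk, hsym]; rfl) l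
end

section
/- Let A be a Noetherian ring, B = A[Y]/I a finitely presented A-algebra, and b_1,…,b_q ∈ B elements generating an ideal whose radical is H_{B/A}. Let γ, γ' ∈ A and set B₀ = B[Z_1,…,Z_q,Z'_1,…,Z'_q]/(−γ + Σ_{i=1}^q b_iZ_i, −γ' + Σ_{i=1}^q b_iZ'_i). Then H_{B/A}·B₀ ⊆ H_{B₀/A}; in particular the images of γ and γ' in B₀ lie in H_{B₀/A}. Moreover, for any A-algebra A' and A-algebra morphism v: B → A' and elements z_1,…,z_q, z'_1,…,z'_q ∈ A' with γ = Σ_i v(b_i)z_i and γ' = Σ_i v(b_i)z'_i, the morphism v extends to an A-algebra morphism v₀: B₀ → A' with v₀(Z_i) = z_i and v₀(Z'_i) = z'_i. -/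
open MvPolynomial

universe u v

variable {A : Type u} [CommRing A] {n q : ℕ}

/-- The ideal of `A[Y, Z, Z']` presenting
`B₀ = B[Z,Z']/(-γ + Σᵢ bᵢ Zᵢ, -γ' + Σᵢ bᵢ Z'ᵢ)`, where `β i` is a lift of `bᵢ` to
`A[Y]`. -/
noncomputable def bzeroIdeal (I : Ideal (MvPolynomial (Fin n) A))
    (β : Fin q → MvPolynomial (Fin n) A) (γ γ' : A) :
    Ideal (MvPolynomial (Fin n ⊕ (Fin q ⊕ Fin q)) A) :=
  Ideal.map (MvPolynomial.rename Sum.inl) I ⊔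
    Ideal.span
      { -(C γ) + ∑ i : Fin q,
          MvPolynomial.rename Sum.inl (β i) * MvPolynomial.X (Sum.inr (Sum.inl i)),
        -(C γ') + ∑ i : Fin q,
          MvPolynomial.rename Sum.inl (β i) * MvPolynomial.X (Sum.inr (Sum.inr i)) }

lemma map_le_bzeroIdeal (I : Ideal (MvPolynomial (Fin n) A))
    (β : Fin q → MvPolynomial (Fin n) A) (γ γ' : A) :
    Ideal.map (MvPolynomial.rename Sum.inl) I ≤ bzeroIdeal I β γ γ' := by
  unfold bzeroIdeal; exact le_sup_left

/-- The canonical map `B = A[Y]/I → B₀`. -/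
noncomputable def bzeroMap (I : Ideal (MvPolynomial (Fin n) A))
    (β : Fin q → MvPolynomial (Fin n) A) (γ γ' : A) :
    (MvPolynomial (Fin n) A ⧸ I) →+*
      (MvPolynomial (Fin n ⊕ (Fin q ⊕ Fin q)) A ⧸ bzeroIdeal I β γ γ') :=
  Ideal.quotientMap (bzeroIdeal I β γ γ') (MvPolynomial.rename Sum.inl).toRingHom
    (Ideal.map_le_iff_le_comap.mp (map_le_bzeroIdeal I β γ γ'))

/-- The index equivalence `Fin n ⊕ (Fin q ⊕ Fin q) ≃ Fin (n + (q + q))`. -/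
def bzeroEquiv : (Fin n ⊕ (Fin q ⊕ Fin q)) ≃ Fin (n + (q + q)) :=
  (Equiv.sumCongr (Equiv.refl (Fin n)) finSumFinEquiv).trans finSumFinEquiv

lemma det_col_zero_aux {R : Type*} [CommRing R] {m : ℕ} (M : Matrix (Fin (m+1)) (Fin (m+1)) R)
    (h : ∀ i : Fin m, M i.succ 0 = 0) :
    M.det = M 0 0 * (M.submatrix Fin.succ Fin.succ).det := by
  rw [Matrix.det_succ_column_zero, Fin.sum_univ_succ]
  simp [h, Fin.succAbove_zero]

lemma pderiv_inr_rename_aux {A : Type*} [CommRing A] {σ τ : Type*} (t : τ)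
    (p : MvPolynomial σ A) :
    pderiv (Sum.inr t : σ ⊕ τ) (rename Sum.inl p) = 0 := by
  classical
  apply pderiv_eq_zero_of_notMem_vars
  intro h
  have := vars_rename (Sum.inl : σ → σ ⊕ τ) p h
  simp at this

lemma preH_key_aux (I : Ideal (MvPolynomial (Fin n) A))
    (β : Fin q → MvPolynomial (Fin n) A) (γ γ' : A) (j : Fin q)
    {x : MvPolynomial (Fin n) A} (hx : x ∈ preHIdeal (Equiv.refl (Fin n)) I) :
    rename Sum.inl x * rename Sum.inl (β j) ^ 2 ∈
      preHIdeal (bzeroEquiv (n := n) (q := q)) (bzeroIdeal I β γ γ') := by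
  classical
  set R : MvPolynomial (Fin n) A →ₐ[A] MvPolynomial (Fin n ⊕ (Fin q ⊕ Fin q)) A :=
    rename Sum.inl with hR
  set P := preHIdeal (bzeroEquiv (n := n) (q := q)) (bzeroIdeal I β γ γ') with hP
  suffices h : preHIdeal (Equiv.refl (Fin n)) I ≤
      Ideal.comap R (Submodule.colon P {R (β j) ^ 2}) by
    have := h hx
    rw [Ideal.mem_comap, Submodule.mem_colon_singleton] at this
    simpa using this
  unfold preHIdeal
  refine iSup_le fun r => iSup_le fun hr => iSup_le fun f => iSup_le fun hf => ?_
  rw [Ideal.mul_le]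
  intro g hg m hm
  suffices h : jacobiDelta f ≤ Ideal.comap R (Submodule.colon P {R g * R (β j) ^ 2}) by
    have := h hm
    rw [Ideal.mem_comap, Submodule.mem_colon_singleton] at this ⊢
    rw [smul_eq_mul] at this ⊢
    rw [map_mul]
    convert this using 1
    ring
  unfold jacobiDelta
  rw [Ideal.span_le]
  rintro _ ⟨c, hc, rfl⟩
  rw [SetLike.mem_coe, Ideal.mem_comap, Submodule.mem_colon_singleton, smul_eq_mul]
  set M : Matrix (Fin r) (Fin r) (MvPolynomial (Fin n) A) :=
    Matrix.of fun i j : Fin r => MvPolynomial.pderiv (c j) (f i) with hM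
  set φ : MvPolynomial (Fin n ⊕ (Fin q ⊕ Fin q)) A :=
    -(C γ) + ∑ i : Fin q, R (β i) * X (Sum.inr (Sum.inl i)) with hφ
  set φ' : MvPolynomial (Fin n ⊕ (Fin q ⊕ Fin q)) A :=
    -(C γ') + ∑ i : Fin q, R (β i) * X (Sum.inr (Sum.inr i)) with hφ'
  have hI0 : bzeroIdeal I β γ γ' = Ideal.map R I ⊔ Ideal.span {φ, φ'} := rfl
  let F : Fin (r + 2) → MvPolynomial (Fin n ⊕ (Fin q ⊕ Fin q)) A :=
    Fin.cons φ (Fin.cons φ' (fun i => R (f i)))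
  let d : Fin (r + 2) → (Fin n ⊕ (Fin q ⊕ Fin q)) :=
    Fin.cons (Sum.inr (Sum.inl j)) (Fin.cons (Sum.inr (Sum.inr j)) (fun i => Sum.inl (c i)))
  have hd : Function.Injective d := by
    simp only [d]
    rw [Fin.cons_injective_iff, Fin.cons_injective_iff]
    refine ⟨?_, ?_, Sum.inl_injective.comp hc⟩
    · rintro ⟨i, hi⟩
      refine Fin.cases ?_ (fun i => ?_) i hi <;> simp
    · rintro ⟨i, hi⟩
      simp at hi
  have hφ0 : φ ∈ bzeroIdeal I β γ γ' := by
    rw [hI0]; exact Ideal.mem_sup_right (Ideal.subset_span (by simp))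
  have hφ0' : φ' ∈ bzeroIdeal I β γ γ' := by
    rw [hI0]; exact Ideal.mem_sup_right (Ideal.subset_span (by simp))
  have hF : ∀ i, F i ∈ bzeroIdeal I β γ γ' := by
    refine Fin.cases hφ0 (Fin.cases hφ0' fun i => ?_)
    rw [hI0]; exact Ideal.mem_sup_left (Ideal.mem_map_of_mem R (hf i))
  have hFφ : φ ∈ Ideal.span (Set.range F) := Ideal.subset_span ⟨0, rfl⟩
  have hFφ' : φ' ∈ Ideal.span (Set.range F) := Ideal.subset_span ⟨1, rfl⟩
  have hFf : Ideal.map R (Ideal.span (Set.range f)) ≤ Ideal.span (Set.range F) := by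
    rw [Ideal.map_span, Ideal.span_le]
    rintro _ ⟨_, ⟨i, rfl⟩, rfl⟩
    exact Ideal.subset_span ⟨i.succ.succ, rfl⟩
  have hcol : R g ∈ Submodule.colon (Ideal.span (Set.range F))
      (bzeroIdeal I β γ γ' : Set (MvPolynomial (Fin n ⊕ (Fin q ⊕ Fin q)) A)) := by
    have h1 : bzeroIdeal I β γ γ' ≤ Submodule.colon (Ideal.span (Set.range F)) {R g} := by
      rw [hI0]
      refine sup_le ?_ ?_
      · rw [Ideal.map_le_iff_le_comap]
        intro y hy
        rw [Ideal.mem_comap, Submodule.mem_colon_singleton, smul_eq_mul, ← map_mul]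
        apply hFf
        apply Ideal.mem_map_of_mem
        have := Submodule.mem_colon.1 hg y hy
        rwa [smul_eq_mul, mul_comm] at this
      · rw [Ideal.span_le]
        rintro _ (rfl | rfl)
        · rw [SetLike.mem_coe, Submodule.mem_colon_singleton, smul_eq_mul]
          exact Ideal.mul_mem_right _ _ hFφ
        · rw [SetLike.mem_coe, Submodule.mem_colon_singleton, smul_eq_mul]
          exact Ideal.mul_mem_right _ _ hFφ'
    rw [Submodule.mem_colon]
    intro y hy
    have := Submodule.mem_colon_singleton.1 (h1 hy)
    rwa [smul_eq_mul, mul_comm] at this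
  have p1 : pderiv (Sum.inr (Sum.inl j)) φ = R (β j) := by
    simp [hφ, hR, pderiv_inr_rename_aux, pderiv_X, Pi.single_apply]
  have p2 : pderiv (Sum.inr (Sum.inr j)) φ' = R (β j) := by
    simp [hφ', hR, pderiv_inr_rename_aux, pderiv_X, Pi.single_apply]
  have p3 : pderiv (Sum.inr (Sum.inl j)) φ' = 0 := by
    simp [hφ', hR, pderiv_inr_rename_aux, pderiv_X, Pi.single_apply]
  have hdet : Matrix.det (Matrix.of fun i k : Fin (r+2) => pderiv (d k) (F i)) =
      R M.det * R (β j) ^ 2 := by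
    rw [det_col_zero_aux, det_col_zero_aux]
    · have : (Matrix.submatrix (Matrix.submatrix
          (Matrix.of fun i k : Fin (r+2) => pderiv (d k) (F i)) Fin.succ Fin.succ)
          Fin.succ Fin.succ) = (R : _ →+* _).mapMatrix M := by
        ext1 i k
        change pderiv (Sum.inl (c k)) (R (f i)) = R (pderiv (c k) (f i))
        rw [hR, pderiv_rename Sum.inl_injective]
      rw [this, ← RingHom.map_det]
      change pderiv (Sum.inr (Sum.inl j)) φ * (pderiv (Sum.inr (Sum.inr j)) φ' * R M.det) = _
      rw [p1, p2]
      ring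
    · intro i
      change pderiv (Sum.inr (Sum.inr j)) (R (f i)) = 0
      exact pderiv_inr_rename_aux _ _
    · refine Fin.cases p3 fun i => ?_
      change pderiv (Sum.inr (Sum.inl j)) (R (f i)) = 0
      exact pderiv_inr_rename_aux _ _
  have hle : r + 2 ≤ n + (q + q) := by have := j.pos; omega
  have hmem : R g * Matrix.det (Matrix.of fun i k : Fin (r+2) => pderiv (d k) (F i)) ∈ P := by
    rw [hP]
    unfold preHIdeal
    refine Submodule.mem_iSup_of_mem (r+2) (Submodule.mem_iSup_of_mem hle
      (Submodule.mem_iSup_of_mem F (Submodule.mem_iSup_of_mem hF ?_)))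
    exact Ideal.mul_mem_mul hcol (Ideal.subset_span ⟨d, hd, rfl⟩)
  rw [hdet] at hmem
  convert hmem using 1
  ring

lemma bzeroMap_mk_aux (I : Ideal (MvPolynomial (Fin n) A))
    (β : Fin q → MvPolynomial (Fin n) A) (γ γ' : A) (x : MvPolynomial (Fin n) A) :
    bzeroMap I β γ γ' (Ideal.Quotient.mk I x) =
      Ideal.Quotient.mk (bzeroIdeal I β γ γ') (rename Sum.inl x) := rfl

/-- Let `A` be a Noetherian ring, `B = A[Y]/I` a finitely presented `A`-algebra and
`b₁,…,b_q ∈ B` elements generating an ideal whose radical is `H_{B/A}` (the `β i ∈ A[Y]`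
are lifts of the `b i`).  Let `γ, γ' ∈ A` and set
`B₀ = B[Z,Z']/(-γ + Σᵢ bᵢZᵢ, -γ' + Σᵢ bᵢZ'ᵢ)`.  Then `H_{B/A}·B₀ ⊆ H_{B₀/A}`; in
particular the images of `γ, γ'` in `B₀` lie in `H_{B₀/A}`.  Moreover, for any
`A`-algebra `A'`, any `A`-algebra morphism `v : B → A'` and any
`z, z' : Fin q → A'` with `γ = Σᵢ v(bᵢ)zᵢ` and `γ' = Σᵢ v(bᵢ)z'ᵢ`, the morphism `v`
extends to an `A`-algebra morphism `v₀ : B₀ → A'` with `v₀(Zᵢ) = zᵢ`, `v₀(Z'ᵢ) = z'ᵢ`. -/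
theorem bzero_H_le_and_extension [IsNoetherianRing A]
    (I : Ideal (MvPolynomial (Fin n) A)) (β : Fin q → MvPolynomial (Fin n) A)
    (hb : (Ideal.span (Set.range fun i => Ideal.Quotient.mk I (β i))).radical =
      HIdeal (Equiv.refl (Fin n)) I)
    (γ γ' : A) :
    Ideal.map (bzeroMap I β γ γ') (HIdeal (Equiv.refl (Fin n)) I) ≤
        HIdeal bzeroEquiv (bzeroIdeal I β γ γ') ∧
      algebraMap A (MvPolynomial (Fin n ⊕ (Fin q ⊕ Fin q)) A ⧸ bzeroIdeal I β γ γ') γ ∈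
        HIdeal bzeroEquiv (bzeroIdeal I β γ γ') ∧
      algebraMap A (MvPolynomial (Fin n ⊕ (Fin q ⊕ Fin q)) A ⧸ bzeroIdeal I β γ γ') γ' ∈
        HIdeal bzeroEquiv (bzeroIdeal I β γ γ') ∧
      ∀ (A' : Type v) (_ : CommRing A') (_ : Algebra A A')
        (v : (MvPolynomial (Fin n) A ⧸ I) →ₐ[A] A') (z z' : Fin q → A'),
        algebraMap A A' γ = ∑ i : Fin q, v (Ideal.Quotient.mk I (β i)) * z i →
        algebraMap A A' γ' = ∑ i : Fin q, v (Ideal.Quotient.mk I (β i)) * z' i →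
        ∃ v₀ : (MvPolynomial (Fin n ⊕ (Fin q ⊕ Fin q)) A ⧸ bzeroIdeal I β γ γ') →ₐ[A] A',
          (∀ x, v₀ (bzeroMap I β γ γ' x) = v x) ∧
          (∀ i, v₀ (Ideal.Quotient.mk (bzeroIdeal I β γ γ')
            (MvPolynomial.X (Sum.inr (Sum.inl i)))) = z i) ∧
          (∀ i, v₀ (Ideal.Quotient.mk (bzeroIdeal I β γ γ')
            (MvPolynomial.X (Sum.inr (Sum.inr i)))) = z' i) := by
  have hbH : ∀ j, bzeroMap I β γ γ' (Ideal.Quotient.mk I (β j)) ∈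
      HIdeal bzeroEquiv (bzeroIdeal I β γ γ') := by
    intro j
    have h1 : Ideal.Quotient.mk I (β j) ∈ HIdeal (Equiv.refl (Fin n)) I := by
      rw [← hb]
      exact Ideal.le_radical (Ideal.subset_span ⟨j, rfl⟩)
    obtain ⟨k, hk⟩ := h1
    obtain ⟨x, hx, hxk⟩ :=
      (Ideal.mem_map_iff_of_surjective _ Ideal.Quotient.mk_surjective).1 hk
    refine ⟨k + 2, ?_⟩
    rw [pow_add, ← map_pow, ← hxk, bzeroMap_mk_aux, bzeroMap_mk_aux, ← map_pow, ← map_mul]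
    exact Ideal.mem_map_of_mem _ (preH_key_aux I β γ γ' j hx)
  have hrad : (HIdeal bzeroEquiv (bzeroIdeal I β γ γ')).IsRadical := Ideal.radical_isRadical _
  refine ⟨?_, ?_, ?_, ?_⟩
  · rw [← hb, Ideal.map_le_iff_le_comap]
    refine (hrad.comap _).radical_le_iff.2 ?_
    rw [Ideal.span_le]
    rintro _ ⟨j, rfl⟩
    exact hbH j
  · have h0 : algebraMap A (MvPolynomial (Fin n ⊕ (Fin q ⊕ Fin q)) A ⧸ bzeroIdeal I β γ γ') γ =
        ∑ i : Fin q, bzeroMap I β γ γ' (Ideal.Quotient.mk I (β i)) *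
          Ideal.Quotient.mk (bzeroIdeal I β γ γ') (X (Sum.inr (Sum.inl i))) := by
      simp only [bzeroMap_mk_aux, ← map_mul, ← map_sum]
      symm
      change _ = Ideal.Quotient.mk (bzeroIdeal I β γ γ') (C γ)
      rw [Ideal.Quotient.eq, sub_eq_neg_add]
      exact Ideal.mem_sup_right (Ideal.subset_span (by simp))
    rw [h0]
    exact Ideal.sum_mem _ fun i _ => Ideal.mul_mem_right _ _ (hbH i)
  · have h0 : algebraMap A (MvPolynomial (Fin n ⊕ (Fin q ⊕ Fin q)) A ⧸ bzeroIdeal I β γ γ') γ' =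
        ∑ i : Fin q, bzeroMap I β γ γ' (Ideal.Quotient.mk I (β i)) *
          Ideal.Quotient.mk (bzeroIdeal I β γ γ') (X (Sum.inr (Sum.inr i))) := by
      simp only [bzeroMap_mk_aux, ← map_mul, ← map_sum]
      symm
      change _ = Ideal.Quotient.mk (bzeroIdeal I β γ γ') (C γ')
      rw [Ideal.Quotient.eq, sub_eq_neg_add]
      exact Ideal.mem_sup_right (Ideal.subset_span (by simp))
    rw [h0]
    exact Ideal.sum_mem _ fun i _ => Ideal.mul_mem_right _ _ (hbH i)
  · intro A' _ _ v z z' hz hz'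
    let w : MvPolynomial (Fin n ⊕ (Fin q ⊕ Fin q)) A →ₐ[A] A' :=
      aeval (Sum.elim (fun i => v (Ideal.Quotient.mk I (X i))) (Sum.elim z z'))
    have hw : ∀ p : MvPolynomial (Fin n) A, w (rename Sum.inl p) = v (Ideal.Quotient.mk I p) := by
      intro p
      have : w.comp (rename Sum.inl) = v.comp (Ideal.Quotient.mkₐ A I) := by
        ext i
        simp [w]
      exact DFunLike.congr_fun this p
    have hw0 : bzeroIdeal I β γ γ' ≤ RingHom.ker w := by
      unfold bzeroIdeal
      refine sup_le ?_ ?_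
      · rw [Ideal.map_le_iff_le_comap]
        intro p hp
        rw [Ideal.mem_comap, RingHom.mem_ker]
        rw [hw, Ideal.Quotient.eq_zero_iff_mem.2 hp, map_zero]
      · rw [Ideal.span_le]
        rintro _ (rfl | rfl)
        · rw [SetLike.mem_coe, RingHom.mem_ker, map_add, map_neg, map_sum]
          simp only [map_mul, hw]
          simp [w, hz]
        · rw [SetLike.mem_coe, RingHom.mem_ker, map_add, map_neg, map_sum]
          simp only [map_mul, hw]
          simp [w, hz']
    refine ⟨Ideal.Quotient.liftₐ _ w fun a ha => hw0 ha, ?_, ?_, ?_⟩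
    · intro x
      obtain ⟨x, rfl⟩ := Ideal.Quotient.mk_surjective x
      exact hw x
    · intro i
      change w _ = _
      simp [w]
    · intro i
      change w _ = _
      simp [w]
end

section
/- Let A be a commutative ring, (A', m') a Henselian local ring equipped with an A-algebra structure, J ⊆ m' an ideal, and C a smooth A-algebra. Then every A-algebra morphism C → A'/J lifts to an A-algebra morphism C → A' (i.e., composing the lift with the projection A' → A'/J recovers the given morphism). -/
open Polynomial in
/-- Lifting roots in a Henselian local ring modulo any proper ideal. -/
theorem henselian_root_lift_ideal {A' : Type*} [CommRing A'] [HenselianLocalRing A']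
    (J : Ideal A') (hJ : J ≤ IsLocalRing.maximalIdeal A') (F : A'[X]) (hF : F.Monic)
    (y : A') (hy : F.eval y ∈ J) (hy' : IsUnit (F.derivative.eval y)) :
    ∃ a : A', F.eval a = 0 ∧ a - y ∈ J := by
  obtain ⟨a, ha, hay⟩ := HenselianLocalRing.is_henselian F hF y (hJ hy) hy'
  refine ⟨a, ha, ?_⟩
  obtain ⟨c, hc⟩ := Polynomial.exists_mul_sq_add_linear_part_eq_eval_add F y (a - y)
  have hu : IsUnit (c * (a - y) + F.derivative.eval y) := by
    by_contra hn
    have h1 : c * (a - y) + F.derivative.eval y ∈ IsLocalRing.maximalIdeal A' := hn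
    have h2 := Ideal.sub_mem _ h1 (Ideal.mul_mem_left _ c hay)
    rw [add_sub_cancel_left] at h2
    exact h2 hy'
  have ha0 : F.eval a = 0 := ha
  rw [← Ideal.unit_mul_mem_iff_mem J hu]
  have : (c * (a - y) + F.derivative.eval y) * (a - y) = - F.eval y := by
    rw [add_sub_cancel, ha0] at hc
    linear_combination hc
  rw [this]
  exact J.neg_mem hy

/-- The standard etale case. -/
theorem standardEtale_lift_of_henselian {R S A' : Type*} [CommRing R] [CommRing S] [Algebra R S]
    [CommRing A'] [HenselianLocalRing A'] [Algebra R A']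
    (P : StandardEtalePresentation R S)
    (J : Ideal A') (hJ : J ≤ IsLocalRing.maximalIdeal A') (f : S →ₐ[R] A' ⧸ J) :
    ∃ g : S →ₐ[R] A', (Ideal.Quotient.mkₐ R J).comp g = f := by
  have hloc : IsLocalHom (Ideal.Quotient.mk J) :=
    isLocalHom_of_le_jacobson_bot J (by rwa [IsLocalRing.jacobson_eq_maximalIdeal _ bot_ne_top])
  obtain ⟨y, hy⟩ := Ideal.Quotient.mk_surjective (I := J) (f P.x)
  have hmap := P.hasMap.map f
  rw [← hy] at hmap
  have key (q : Polynomial R) (z : A') : Polynomial.aeval (Ideal.Quotient.mk J z) q =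
      Ideal.Quotient.mk J (Polynomial.aeval z q) :=
    Polynomial.aeval_algHom_apply (Ideal.Quotient.mkₐ R J) z q
  have hd := hmap.isUnit_derivative_f
  rw [key] at hd
  have h1 := hmap.1
  rw [key, Ideal.Quotient.eq_zero_iff_mem] at h1
  obtain ⟨a, ha, hay⟩ := henselian_root_lift_ideal J hJ (P.f.map (algebraMap R A'))
    (P.monic_f.map _) y (by simpa using h1)
    (by simpa [Polynomial.derivative_map] using hd.of_map (Ideal.Quotient.mk J))
  have hmk : Ideal.Quotient.mk J a = Ideal.Quotient.mk J y := Ideal.Quotient.eq.mpr hay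
  have hmapa : P.HasMap a := by
    refine ⟨by simpa using ha, ?_⟩
    have h2 := hmap.2
    rw [← hmk, key] at h2
    exact h2.of_map (Ideal.Quotient.mk J)
  refine ⟨(P.P.lift a hmapa).comp P.equivRing.toAlgHom, P.hom_ext ?_⟩
  simp [hmk, hy]

/-- Let `A` be a commutative ring, `(A', m')` a Henselian local ring which is an
`A`-algebra, `J ⊆ m'` an ideal and `C` a smooth `A`-algebra.  Then every `A`-algebra
morphism `C → A'/J` lifts to an `A`-algebra morphism `C → A'`: composing the lift with
the projection `A' → A'/J` recovers the given morphism. -/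
theorem smooth_lift_of_henselian {A A' C : Type u} [CommRing A] [CommRing A']
    [IsLocalRing A'] [HenselianLocalRing A'] [Algebra A A']
    (J : Ideal A') (hJ : J ≤ IsLocalRing.maximalIdeal A')
    [CommRing C] [Algebra A C] [Algebra.Smooth A C]
    (f : C →ₐ[A] A' ⧸ J) :
    ∃ g : C →ₐ[A] A', (Ideal.Quotient.mkₐ A J).comp g = f := by
  have hnt : Nontrivial (A' ⧸ J) :=
    Ideal.Quotient.nontrivial_iff.mpr (fun h => (IsLocalRing.maximalIdeal.isMaximal A').ne_top
      (top_le_iff.mp (h ▸ hJ)))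
  have hlocal : IsLocalRing (A' ⧸ J) :=
    IsLocalRing.of_surjective' (Ideal.Quotient.mk J) Ideal.Quotient.mk_surjective
  let p : Ideal C := (IsLocalRing.maximalIdeal (A' ⧸ J)).comap f
  have hp : p.IsPrime := Ideal.comap_isPrime _ _
  have hsm : Algebra.IsSmoothAt A p := by
    have := Algebra.smoothLocus_eq_univ (R := A) (A := C)
    exact this.ge (Set.mem_univ (⟨p, hp⟩ : PrimeSpectrum C))
  obtain ⟨s, hs, n, _, _, ⟨⟨P⟩⟩⟩ :=
    Algebra.IsSmoothAt.exists_isStandardEtale_mvPolynomial (R := A) (p := p)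
  have hsu : IsUnit (f s) := by
    by_contra h
    exact hs h
  let f' : Localization.Away s →ₐ[A] A' ⧸ J := IsLocalization.Away.liftAlgHom s (f := f) hsu
  have hf' (c : C) : f' (algebraMap C _ c) = f c := by
    simp [f']
  choose a ha using fun i : Fin n => Ideal.Quotient.mk_surjective (I := J)
    (f' (algebraMap (MvPolynomial (Fin n) A) _ (MvPolynomial.X i)))
  let φ : MvPolynomial (Fin n) A →ₐ[A] A' := MvPolynomial.aeval a
  let : Algebra (MvPolynomial (Fin n) A) A' := φ.toAlgebra
  have hcomp : (Ideal.Quotient.mkₐ A J).comp φ =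
      f'.comp (IsScalarTower.toAlgHom A (MvPolynomial (Fin n) A) (Localization.Away s)) := by
    ext i
    simp [φ, ha]
  let f'' : Localization.Away s →ₐ[MvPolynomial (Fin n) A] A' ⧸ J :=
    { f' with commutes' := fun r => (DFunLike.congr_fun hcomp r).symm }
  obtain ⟨g, hg⟩ := standardEtale_lift_of_henselian P J hJ f''
  refine ⟨{ g.toRingHom.comp (algebraMap C (Localization.Away s)) with
    commutes' := fun r => ?_ }, ?_⟩
  · change g (algebraMap C (Localization.Away s) (algebraMap A C r)) = algebraMap A A' r
    rw [← IsScalarTower.algebraMap_apply A C,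
      IsScalarTower.algebraMap_apply A (MvPolynomial (Fin n) A), g.commutes]
    exact φ.commutes r
  · ext c
    exact (DFunLike.congr_fun hg (algebraMap C _ c)).trans (hf' c)
end
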